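/- arXiv:1302.1149 — 2 statements merged into one kernel-verified Lean document; each statement's English description precedes it below -/
import Mathlib

section
/- Let (A, d, Δ) be a differential Batalin–Vilkovisky algebra of odd degree k over a field K of characteristic 0 which has the degeneration property. Then the associated DGLA g = A[k], with differential −d and bracket [a,b] = (−1)^{deg a}(Δ(ab) − Δ(a)b) − aΔ(b), is homotopy abelian. -/
/-!
Basic homotopical algebra of differential graded Lie algebras over a field of
characteristic zero, following [Iacono, "Deformations and obstructions of pairs (X,D)"].

A differential graded Lie algebra (DGLA) is encoded as a `K`-module together with an
internal `ℤ`-grading (a family of submodules whose direct sum is the whole module),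
a differential of degree `+1` squaring to zero, and a bracket which is graded
skew-symmetric, satisfies the graded Jacobi identity and the graded Leibniz rule.
-/

universe u v w

/-- A `ℤ`-graded cochain complex structure on a `K`-module `V`: an internal grading
together with a differential of degree `+1` squaring to zero. -/
structure CochainStruct (K : Type u) [Field K] (V : Type v) [AddCommGroup V] [Module K V] :
    Type (max u v) where
  grading : ℤ → Submodule K V
  isInternal : DirectSum.IsInternal grading
  d : V →ₗ[K] V
  d_degree : ∀ i : ℤ, ∀ x ∈ grading i, d x ∈ grading (i + 1)
  d_sq : ∀ x : V, d (d x) = 0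

namespace CochainStruct

variable {K : Type u} [Field K] {V : Type v} [AddCommGroup V] [Module K V]
  {W : Type w} [AddCommGroup W] [Module K W]

/-- Degree `i` cocycles. -/
def cocycles (c : CochainStruct K V) (i : ℤ) : Submodule K V :=
  c.grading i ⊓ LinearMap.ker c.d

/-- Degree `i` coboundaries, as a submodule of the degree `i` cocycles. -/
def coboundaries (c : CochainStruct K V) (i : ℤ) : Submodule K (c.cocycles i) :=
  Submodule.comap (c.cocycles i).subtype (c.grading i ⊓ LinearMap.range c.d)

/-- The degree `i` cohomology of a graded cochain complex. -/
def cohomology (c : CochainStruct K V) (i : ℤ) : Type v :=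
  c.cocycles i ⧸ c.coboundaries i

instance (c : CochainStruct K V) (i : ℤ) : AddCommGroup (c.cohomology i) :=
  inferInstanceAs (AddCommGroup (c.cocycles i ⧸ c.coboundaries i))

instance (c : CochainStruct K V) (i : ℤ) : Module K (c.cohomology i) :=
  inferInstanceAs (Module K (c.cocycles i ⧸ c.coboundaries i))

end CochainStruct

/-- A (degree zero) morphism of graded cochain complexes. -/
structure CochainMap {K : Type u} [Field K] {V : Type v} {W : Type w}
    [AddCommGroup V] [Module K V] [AddCommGroup W] [Module K W]
    (c : CochainStruct K V) (c' : CochainStruct K W) : Type (max u v w) where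
  toFun : V →ₗ[K] W
  map_grading : ∀ i : ℤ, ∀ x ∈ c.grading i, toFun x ∈ c'.grading i
  map_d : ∀ x : V, toFun (c.d x) = c'.d (toFun x)

namespace CochainMap

variable {K : Type u} [Field K] {V : Type v} {W : Type w}
  [AddCommGroup V] [Module K V] [AddCommGroup W] [Module K W]
  {c : CochainStruct K V} {c' : CochainStruct K W}

/-- The induced map on cocycles. -/
def cocyclesMap (f : CochainMap c c') (i : ℤ) : c.cocycles i →ₗ[K] c'.cocycles i :=
  f.toFun.restrict (p := c.cocycles i) (q := c'.cocycles i) fun x hx => by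
    rcases Submodule.mem_inf.mp hx with ⟨h1, h2⟩
    refine Submodule.mem_inf.mpr ⟨f.map_grading i x h1, ?_⟩
    simp only [LinearMap.mem_ker] at h2 ⊢
    rw [← f.map_d, h2, map_zero]

/-- The induced map in cohomology. -/
def cohMap (f : CochainMap c c') (i : ℤ) :
    c.cohomology i →ₗ[K] c'.cohomology i :=
  Submodule.mapQ (c.coboundaries i) (c'.coboundaries i) (f.cocyclesMap i) (by
    rintro ⟨x, hx⟩ hmem
    simp only [CochainStruct.coboundaries, Submodule.mem_comap] at hmem ⊢
    rcases Submodule.mem_inf.mp hmem with ⟨h1, h2⟩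
    refine Submodule.mem_inf.mpr ⟨?_, ?_⟩
    · exact f.map_grading i x h1
    · rcases h2 with ⟨y, hy⟩
      exact ⟨f.toFun y, by
        have := f.map_d y
        simp only [Submodule.coe_subtype] at hy ⊢
        rw [← this, hy]
        rfl⟩)

end CochainMap

/-- A differential graded Lie algebra structure on a `K`-module `L`:
a graded cochain complex together with a degree zero graded bracket which is
graded skew-symmetric and satisfies the graded Jacobi identity and the graded
Leibniz rule. -/
structure DGLAStruct (K : Type u) [Field K] (L : Type v) [AddCommGroup L] [Module K L]
    extends CochainStruct K L where
  bracket : L →ₗ[K] L →ₗ[K] L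
  bracket_degree : ∀ i j : ℤ, ∀ x ∈ grading i, ∀ y ∈ grading j, bracket x y ∈ grading (i + j)
  bracket_skew : ∀ i j : ℤ, ∀ x ∈ grading i, ∀ y ∈ grading j,
    bracket x y = -(((-1 : K) ^ (i * j)) • bracket y x)
  bracket_jacobi : ∀ i j : ℤ, ∀ x ∈ grading i, ∀ y ∈ grading j, ∀ z : L,
    bracket x (bracket y z) =
      bracket (bracket x y) z + ((-1 : K) ^ (i * j)) • bracket y (bracket x z)
  bracket_leibniz : ∀ i : ℤ, ∀ x ∈ grading i, ∀ y : L,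
    d (bracket x y) = bracket (d x) y + ((-1 : K) ^ i) • bracket x (d y)

/-- A morphism of differential graded Lie algebras. -/
structure DGLAStructHom {K : Type u} [Field K] {L : Type v} {M : Type w}
    [AddCommGroup L] [Module K L] [AddCommGroup M] [Module K M]
    (g : DGLAStruct K L) (h : DGLAStruct K M) : Type (max u v w) where
  toFun : L →ₗ[K] M
  map_grading : ∀ i : ℤ, ∀ x ∈ g.grading i, toFun x ∈ h.grading i
  map_d : ∀ x : L, toFun (g.d x) = h.d (toFun x)
  map_bracket : ∀ x y : L, toFun (g.bracket x y) = h.bracket (toFun x) (toFun y)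

namespace DGLAStructHom

variable {K : Type u} [Field K] {L : Type v} {M : Type w}
  [AddCommGroup L] [Module K L] [AddCommGroup M] [Module K M]
  {g : DGLAStruct K L} {h : DGLAStruct K M}

/-- The underlying morphism of complexes of a morphism of DGLAs. -/
def toCochainMap (f : DGLAStructHom g h) :
    CochainMap g.toCochainStruct h.toCochainStruct :=
  ⟨f.toFun, f.map_grading, f.map_d⟩

/-- A quasi-isomorphism of DGLAs is a morphism inducing bijections in cohomology. -/
def IsQuasiIso (f : DGLAStructHom g h) : Prop :=
  ∀ i : ℤ, Function.Bijective (f.toCochainMap.cohMap i)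

end DGLAStructHom

/-- A bundled differential graded Lie algebra over `K`. -/
structure DGLA (K : Type u) [Field K] : Type (max u (v + 1)) where
  carrier : Type v
  [acg : AddCommGroup carrier]
  [mod : Module K carrier]
  str : DGLAStruct K carrier

attribute [instance] DGLA.acg DGLA.mod

namespace DGLA

variable {K : Type u} [Field K]

/-- Two DGLAs are related if there is a quasi-isomorphism from the first to the second. -/
def qisRel : DGLA.{u, v} K → DGLA.{u, v} K → Prop := fun X Y =>
  ∃ f : DGLAStructHom X.str Y.str, f.IsQuasiIso

/-- Homotopy equivalence of DGLAs: the equivalence relation generated by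
quasi-isomorphisms. -/
def HomotopyEquiv (X Y : DGLA.{u, v} K) : Prop :=
  Relation.EqvGen qisRel X Y

/-- A DGLA is abelian if its bracket is trivial. -/
def IsAbelian (X : DGLA.{u, v} K) : Prop :=
  ∀ x y : X.carrier, X.str.bracket x y = 0

/-- A DGLA is homotopy abelian if it is homotopy equivalent (i.e. quasi-isomorphic,
under the equivalence relation generated by quasi-isomorphisms) to an abelian DGLA. -/
def HomotopyAbelian (X : DGLA.{u, v} K) : Prop :=
  ∃ Y : DGLA.{u, v} K, Y.IsAbelian ∧ X.HomotopyEquiv Y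

end DGLA

/-- A zig-zag of morphisms of DGLAs (the backwards arrows being quasi-isomorphisms):
a morphism in the homotopy category of DGLAs, i.e. an `L∞` morphism of DGLAs. -/
inductive ZigZag {K : Type u} [Field K] : DGLA.{u, v} K → DGLA.{u, v} K → Type (max u (v + 1))
  | refl (X : DGLA.{u, v} K) : ZigZag X X
  | fwd {X Y Z : DGLA.{u, v} K} (f : DGLAStructHom X.str Y.str) (t : ZigZag Y Z) : ZigZag X Z
  | bwd {X Y Z : DGLA.{u, v} K} (f : DGLAStructHom Y.str X.str) (hf : f.IsQuasiIso)
      (t : ZigZag Y Z) : ZigZag X Z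

/-- The map induced in cohomology by a zig-zag of morphisms of DGLAs. -/
noncomputable def ZigZag.cohMap {K : Type u} [Field K] :
    ∀ {X Y : DGLA.{u, v} K}, ZigZag X Y → ∀ i : ℤ,
      X.str.toCochainStruct.cohomology i →ₗ[K] Y.str.toCochainStruct.cohomology i
  | _, _, .refl _, _ => LinearMap.id
  | _, _, .fwd f t, i => (t.cohMap i).comp (f.toCochainMap.cohMap i)
  | _, _, .bwd f hf t, i =>
      (t.cohMap i).comp
        ((LinearEquiv.ofBijective (f.toCochainMap.cohMap i) (hf i)).symm.toLinearMap)

/-!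
Differential Batalin–Vilkovisky algebras of odd degree `k` over a field of
characteristic `0`, their degeneration property, and the complex of formal Laurent
series `A((t))` with the differential `d - tΔ`, where `t` is a central formal variable
of (even) degree `k + 1`.  An element of `A((t))` is encoded as a function `ℤ → A`
(its family of `t`-coefficients) with support bounded below.
-/

/-- A differential Batalin–Vilkovisky algebra of degree `k` over `K` on the
`ℤ`-graded (graded-commutative) `K`-algebra `A`: a differential `d` of degree `+1`
making `A` a differential graded commutative algebra, together with an operator `Δ`
of degree `-k` with `Δ² = 0`, `Δ(1) = 0`, satisfying the seven-term relation. -/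
structure DBV (K : Type u) [Field K] (k : ℤ) (A : Type v) [Ring A] [Algebra K A] :
    Type (max u v) where
  grading : ℤ → Submodule K A
  isInternal : DirectSum.IsInternal grading
  one_mem : (1 : A) ∈ grading 0
  mul_mem : ∀ i j : ℤ, ∀ a ∈ grading i, ∀ b ∈ grading j, a * b ∈ grading (i + j)
  mul_gcomm : ∀ i j : ℤ, ∀ a ∈ grading i, ∀ b ∈ grading j,
    a * b = ((-1 : K) ^ (i * j)) • (b * a)
  d : A →ₗ[K] A
  d_degree : ∀ i : ℤ, ∀ a ∈ grading i, d a ∈ grading (i + 1)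
  d_sq : ∀ a : A, d (d a) = 0
  d_leibniz : ∀ i : ℤ, ∀ a ∈ grading i, ∀ b : A,
    d (a * b) = d a * b + ((-1 : K) ^ i) • (a * d b)
  Δ : A →ₗ[K] A
  Δ_degree : ∀ i : ℤ, ∀ a ∈ grading i, Δ a ∈ grading (i - k)
  Δ_sq : ∀ a : A, Δ (Δ a) = 0
  Δ_one : Δ 1 = 0
  seven_term : ∀ i j l : ℤ, ∀ a ∈ grading i, ∀ b ∈ grading j, ∀ c ∈ grading l,
    Δ (a * b * c) + Δ a * b * c + ((-1 : K) ^ (i * j)) • (Δ b * a * c)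
        + ((-1 : K) ^ (l * (i + j))) • (Δ c * a * b)
      = Δ (a * b) * c + ((-1 : K) ^ (i * (j + l))) • (Δ (b * c) * a)
        + ((-1 : K) ^ (j * l)) • (Δ (a * c) * b)

namespace DBV

variable {K : Type u} [Field K] {k : ℤ} {A : Type v} [Ring A] [Algebra K A]

/-- The degeneration property of a dBV algebra: for every `a₀` with `d a₀ = 0` there
is a sequence `(a_i)_{i ≥ 0}` with `deg a_i = deg a_{i-1} - k - 1` and
`Δ a_i = d a_{i+1}` for all `i ≥ 0`. -/
def DegenerationProperty (B : DBV K k A) : Prop :=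
  ∀ (i : ℤ) (a₀ : A), a₀ ∈ B.grading i → B.d a₀ = 0 →
    ∃ a : ℕ → A, a 0 = a₀ ∧ (∀ n : ℕ, a n ∈ B.grading (i - n * (k + 1))) ∧
      ∀ n : ℕ, B.Δ (a n) = B.d (a (n + 1))

end DBV

section Laurent

variable (K : Type u) [Field K] (A : Type v) [Ring A] [Algebra K A]

/-- The space `A((t))` of formal Laurent series `Σ_p a_p t^p` with coefficients in `A`,
as the submodule of coefficient functions `ℤ → A` with support bounded below. -/
def laurentSupport : Submodule K (ℤ → A) where
  carrier := {f | ∃ N : ℤ, ∀ p : ℤ, p < N → f p = 0}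
  zero_mem' := ⟨0, fun _ _ => rfl⟩
  add_mem' := by
    rintro f g ⟨N, hN⟩ ⟨N', hN'⟩
    refine ⟨min N N', fun p hp => ?_⟩
    have h1 : f p = 0 := hN p (lt_of_lt_of_le hp (min_le_left _ _))
    have h2 : g p = 0 := hN' p (lt_of_lt_of_le hp (min_le_right _ _))
    show f p + g p = 0
    rw [h1, h2, add_zero]
  smul_mem' := by
    rintro c f ⟨N, hN⟩
    refine ⟨N, fun p hp => ?_⟩
    show c • f p = 0
    rw [hN p hp, smul_zero]

/-- `A((t))`, formal Laurent series with coefficients in `A`. -/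
abbrev Laurent : Type v := ↥(laurentSupport K A)

variable {K A}

/-- The differential `d - tΔ` on `A((t))`, acting on coefficients by
`(d - tΔ)(f)_p = d (f_p) - Δ (f_{p-1})`. -/
noncomputable def laurentD (B : DBV K k A) : Laurent K A →ₗ[K] Laurent K A :=
  LinearMap.restrict
    (LinearMap.pi fun p : ℤ =>
      B.d.comp (LinearMap.proj p) - B.Δ.comp (LinearMap.proj (p - 1)))
    (p := laurentSupport K A) (q := laurentSupport K A)
    (fun f hf => by
      rcases hf with ⟨N, hN⟩
      refine ⟨N, fun p hp => ?_⟩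
      have h1 : f p = 0 := hN p hp
      have h2 : f (p - 1) = 0 := hN _ (by omega)
      simp [LinearMap.pi_apply, h1, h2])

/-- The contraction operator `i_a : A((t)) → A((t))`, `i_a(b) = (1/t) a b`, acting on
coefficients by `(i_a f)_p = a * f_{p+1}`. -/
noncomputable def laurentContr (a : A) : Laurent K A →ₗ[K] Laurent K A :=
  LinearMap.restrict
    (LinearMap.pi fun p : ℤ => (LinearMap.mulLeft K a).comp (LinearMap.proj (p + 1)))
    (p := laurentSupport K A) (q := laurentSupport K A)
    (fun f hf => by
      rcases hf with ⟨N, hN⟩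
      refine ⟨N - 1, fun p hp => ?_⟩
      have h1 : f (p + 1) = 0 := hN _ (by omega)
      simp [LinearMap.pi_apply, h1])

/-- The filtration `F^p = t^p A[[t]]` of `A((t))`; in particular `F^0 = A[[t]]`
and `F^1 = t A[[t]]`. -/
def laurentF (p : ℤ) : Submodule K (Laurent K A) where
  carrier := {f | ∀ q : ℤ, q < p → (f : ℤ → A) q = 0}
  zero_mem' := fun _ _ => rfl
  add_mem' := by
    rintro f g hf hg q hq
    show (f : ℤ → A) q + (g : ℤ → A) q = 0
    rw [hf q hq, hg q hq, add_zero]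
  smul_mem' := by
    rintro c f hf q hq
    show c • (f : ℤ → A) q = 0
    rw [hf q hq, smul_zero]

end Laurent


namespace BVProof

/-- Ambient structure: axioms only on homogeneous elements. -/
structure PreDGLA (K : Type u) [Field K] (W : Type v) [AddCommGroup W] [Module K W] where
  G : ℤ → Submodule K W
  indep : iSupIndep G
  d : W →ₗ[K] W
  br : W →ₗ[K] W →ₗ[K] W
  τ : W →ₗ[K] W
  tau_eq : ∀ i, ∀ x ∈ G i, τ x = ((-1 : K) ^ i) • x
  d_deg : ∀ i, ∀ x ∈ G i, d x ∈ G (i + 1)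
  d_sq : ∀ i, ∀ x ∈ G i, d (d x) = 0
  br_deg : ∀ i j, ∀ x ∈ G i, ∀ y ∈ G j, br x y ∈ G (i + j)
  skew : ∀ i j, ∀ x ∈ G i, ∀ y ∈ G j, br x y = -(((-1 : K) ^ (i * j)) • br y x)
  jac : ∀ i j l, ∀ x ∈ G i, ∀ y ∈ G j, ∀ z ∈ G l,
    br x (br y z) = br (br x y) z + ((-1 : K) ^ (i * j)) • br y (br x z)
  leib : ∀ i j, ∀ x ∈ G i, ∀ y ∈ G j,
    d (br x y) = br (d x) y + ((-1 : K) ^ i) • br x (d y)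

section sub
variable {K : Type u} [Field K] {W : Type v} [AddCommGroup W] [Module K W]

lemma internal_comap (H : ℤ → Submodule K W) (h : iSupIndep H) :
    DirectSum.IsInternal fun i => (H i).comap (⨆ i, H i).subtype := by
  refine (DirectSum.isInternal_submodule_iff_iSupIndep_and_iSup_eq_top _).mpr ⟨?_, ?_⟩
  · let p := ⨆ i, H i
    have hp : ∀ i, H i ≤ p := fun i => le_iSup H i
    let e : Submodule K p ≃o Set.Iic p := p.mapIic
    suffices (e ∘ fun i ↦ (H i).comap p.subtype) = fun i ↦ ⟨H i, hp i⟩ by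
      rw [← iSupIndep_map_orderIso_iff e, this]
      exact .of_coe_Iic_comp h
    ext i m
    change m ∈ ((H i).comap p.subtype).map p.subtype ↔ _
    rw [Submodule.map_comap_subtype, inf_of_le_right (hp i)]
  · rw [eq_top_iff]
    rintro ⟨x, hx⟩ -
    have : ∀ x ∈ ⨆ i, H i, ∀ hx : x ∈ ⨆ i, H i, (⟨x, hx⟩ : ↥(⨆ i, H i)) ∈
        ⨆ i, (H i).comap (⨆ i, H i).subtype := by
      intro x hx
      induction hx using Submodule.iSup_induction' with
      | mem i x h => 
        intro hx
        exact Submodule.mem_iSup_of_mem i h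
      | zero => intro _; exact zero_mem _
      | add x y hx hy h1 h2 =>
        intro _
        exact add_mem (h1 hx) (h2 hy)
    exact this x hx hx

lemma iSup_ext {X : Type w} [AddCommGroup X] [Module K X] {H : ℤ → Submodule K W}
    {f g : ↥(⨆ i, H i) →ₗ[K] X}
    (h : ∀ i, ∀ x : ↥(⨆ i, H i), (x : W) ∈ H i → f x = g x) : f = g := by
  ext ⟨x, hx⟩
  have : ∀ x ∈ ⨆ i, H i, ∀ hx : x ∈ ⨆ i, H i, f ⟨x, hx⟩ = g ⟨x, hx⟩ := by
    intro x hx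
    induction hx using Submodule.iSup_induction' with
    | mem i x h1 => intro hx; exact h i _ h1
    | zero => intro hx; exact (map_zero f).trans (map_zero g).symm
    | add x y hx hy h1 h2 =>
      intro _
      have e : (⟨x + y, by assumption⟩ : ↥(⨆ i, H i)) = ⟨x, hx⟩ + ⟨y, hy⟩ := rfl
      rw [e, map_add, map_add, h1 hx, h2 hy]
  exact this x hx hx

lemma map_iSup {X : Type w} [AddCommGroup X] [Module K X] {H : ℤ → Submodule K W}
    (f : W →ₗ[K] X) (P : Submodule K X) (h : ∀ i, ∀ x ∈ H i, f x ∈ P) :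
    ∀ x ∈ ⨆ i, H i, f x ∈ P := by
  have : (⨆ i, H i) ≤ P.comap f := iSup_le fun i x hx => h i x hx
  exact this

lemma map_iSup₂ {X : Type w} [AddCommGroup X] [Module K X] {H : ℤ → Submodule K W}
    (f : W →ₗ[K] W →ₗ[K] X) (P : Submodule K X)
    (h : ∀ i j, ∀ x ∈ H i, ∀ y ∈ H j, f x y ∈ P) :
    ∀ x ∈ ⨆ i, H i, ∀ y ∈ ⨆ i, H i, f x y ∈ P := by
  intro x hx y hy
  refine map_iSup (f.flip y) P (fun i x hx => ?_) x hx
  exact map_iSup (f x) P (fun j y hy => h i j x hx y hy) y hy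

lemma exists_of_internal {X : Type w} [AddCommGroup X] [Module K X] {H : ℤ → Submodule K W}
    (hH : DirectSum.IsInternal H) (φ : ∀ i, ↥(H i) →ₗ[K] X) :
    ∃ f : W →ₗ[K] X, ∀ i (x : H i), f x = φ i x := by
  classical
  let e := LinearEquiv.ofBijective (DirectSum.coeLinearMap H) hH
  refine ⟨(DirectSum.toModule K ℤ X φ).comp e.symm.toLinearMap, fun i x => ?_⟩
  have : e.symm (x : W) = DirectSum.lof K ℤ (fun i => H i) i x := by
    rw [LinearEquiv.symm_apply_eq]
    exact (DirectSum.coeLinearMap_lof H i x).symm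
  simp [this]

/-- The DGLA spanned by a family of homogeneous submodules. -/
noncomputable def subDGLA (S : PreDGLA K W) (H : ℤ → Submodule K W) (hH : ∀ i, H i ≤ S.G i)
    (hd : ∀ i, ∀ x ∈ H i, S.d x ∈ H (i + 1))
    (hb : ∀ i j, ∀ x ∈ H i, ∀ y ∈ H j, S.br x y ∈ H (i + j)) :
    DGLAStruct K ↥(⨆ i, H i) where
  grading i := (H i).comap (⨆ i, H i).subtype
  isInternal := internal_comap H (S.indep.mono hH)
  d := S.d.restrict (p := ⨆ i, H i) (q := ⨆ i, H i)
    (map_iSup _ _ fun i x hx => Submodule.mem_iSup_of_mem _ (hd i x hx))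
  d_degree i x hx := hd i x hx
  d_sq x := by
    apply Subtype.ext
    have := map_iSup (H := H) (S.d ∘ₗ S.d) ⊥ (fun i x hx => by
      simpa using S.d_sq i x (hH i hx)) x x.2
    simpa using this
  bracket := LinearMap.mk₂ K (fun x y => ⟨S.br x y, map_iSup₂ S.br _
      (fun i j x hx y hy => Submodule.mem_iSup_of_mem _ (hb i j x hx y hy)) x x.2 y y.2⟩)
    (fun x y z => by ext; simp) (fun c x y => by ext; simp) (fun x y z => by ext; simp)
    (fun c x y => by ext; simp)
  bracket_degree i j x hx y hy := hb i j x hx y hy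
  bracket_skew i j x hx y hy := by
    ext
    simpa using S.skew i j x (hH i hx) y (hH j hy)
  bracket_jacobi i j x hx y hy z := by
    ext
    have := map_iSup (H := H) (S.br x ∘ₗ S.br y - S.br (S.br x y) -
      ((-1 : K) ^ (i * j)) • (S.br y ∘ₗ S.br x)) ⊥ (fun l z hz => by
      have := S.jac i j l x (hH i hx) y (hH j hy) z (hH l hz)
      simp [this]) z z.2
    simp only [LinearMap.sub_apply, LinearMap.comp_apply, LinearMap.smul_apply,
      Submodule.mem_bot] at this
    simp only [LinearMap.mk₂_apply, Submodule.coe_add, Submodule.coe_smul]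
    rw [sub_sub, sub_eq_zero] at this
    exact this
  bracket_leibniz i x hx y := by
    ext
    have := map_iSup (H := H) (S.d ∘ₗ S.br x - S.br (S.d x) -
      ((-1 : K) ^ i) • (S.br x ∘ₗ S.d)) ⊥ (fun l z hz => by
      have := S.leib i l x (hH i hx) z (hH l hz)
      simp [this]) y y.2
    simp only [LinearMap.sub_apply, LinearMap.comp_apply, LinearMap.smul_apply,
      Submodule.mem_bot] at this
    simp only [LinearMap.mk₂_apply, Submodule.coe_add, Submodule.coe_smul]
    rw [sub_sub, sub_eq_zero] at this
    exact this

lemma isQuasiIso_of {L : Type v} {M : Type w}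
    [AddCommGroup L] [Module K L] [AddCommGroup M] [Module K M]
    {g : DGLAStruct K L} {h : DGLAStruct K M} (f : DGLAStructHom g h)
    (hinj : ∀ i, ∀ x ∈ g.grading i, g.d x = 0 → (∃ y, h.d y = f.toFun x) → ∃ z, g.d z = x)
    (hsurj : ∀ i, ∀ y ∈ h.grading i, h.d y = 0 → ∃ x ∈ g.grading i, g.d x = 0 ∧
      ∃ z, h.d z = f.toFun x - y) : f.IsQuasiIso := by
  intro i
  constructor
  · refine (injective_iff_map_eq_zero (f.toCochainMap.cohMap i)).mpr ?_
    intro a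
    obtain ⟨⟨x, hx⟩, rfl⟩ := Submodule.Quotient.mk_surjective _ a
    intro h0
    have h1 : f.toCochainMap.cocyclesMap i ⟨x, hx⟩ ∈
        CochainStruct.coboundaries h.toCochainStruct i :=
      (Submodule.Quotient.mk_eq_zero _).mp h0
    refine (Submodule.Quotient.mk_eq_zero _).mpr ?_
    obtain ⟨hxg, hxd⟩ := Submodule.mem_inf.mp hx
    refine Submodule.mem_comap.mpr (Submodule.mem_inf.mpr ⟨hxg, ?_⟩)
    exact hinj i x hxg hxd (Submodule.mem_inf.mp h1).2
  · intro b
    obtain ⟨⟨y, hy⟩, rfl⟩ := Submodule.Quotient.mk_surjective _ b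
    obtain ⟨hyg, hyd⟩ := Submodule.mem_inf.mp hy
    obtain ⟨x, hxg, hxd, hz⟩ := hsurj i y hyg hyd
    refine ⟨Submodule.Quotient.mk ⟨x, Submodule.mem_inf.mpr ⟨hxg, hxd⟩⟩, ?_⟩
    refine (Submodule.Quotient.eq _).mpr ?_
    refine Submodule.mem_comap.mpr (Submodule.mem_inf.mpr ⟨?_, hz⟩)
    exact sub_mem (f.map_grading i x hxg) hyg

end sub

end BVProof

namespace BVProof
section hl
variable {K : Type u} [Field K] {W : Type u} [AddCommGroup W] [Module K W]

lemma exists_between (C Z H : Submodule K W) (hC : C ≤ H) (hZ : Z ≤ H) :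
    ∃ N : Submodule K W, C ≤ N ∧ N ≤ H ∧ H ≤ N ⊔ Z ∧ N ⊓ Z ≤ C := by
  obtain ⟨N', hN'⟩ := Submodule.exists_isCompl (Z ⊔ C)
  refine ⟨C ⊔ N' ⊓ H, le_sup_left, sup_le hC inf_le_right, ?_, ?_⟩
  · have h1 : H ≤ (Z ⊔ C) ⊔ N' ⊓ H := by
      rw [← sup_inf_assoc_of_le N' (sup_le hZ hC), hN'.sup_eq_top, top_inf_eq]
    refine h1.trans (sup_le (sup_le le_sup_right ?_) ?_)
    · exact le_sup_left.trans le_sup_left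
    · exact le_sup_right.trans le_sup_left
  · have h1 : (C ⊔ N' ⊓ H) ⊓ (Z ⊔ C) ≤ C := by
      rw [sup_inf_assoc_of_le _ (le_sup_right : C ≤ Z ⊔ C)]
      refine sup_le le_rfl ?_
      have : N' ⊓ H ⊓ (Z ⊔ C) ≤ ⊥ := by
        rw [← hN'.inf_eq_bot]
        exact le_inf inf_le_right (inf_le_left.trans inf_le_left)
      exact this.trans bot_le
    exact (inf_le_inf_left _ le_sup_left).trans h1

lemma exists_compl_in (T Z : Submodule K W) (hT : T ≤ Z) :
    ∃ V : Submodule K W, V ≤ Z ∧ V ⊓ T ≤ ⊥ ∧ Z ≤ V ⊔ T := by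
  obtain ⟨N', hN'⟩ := Submodule.exists_isCompl T
  refine ⟨N' ⊓ Z, inf_le_right, ?_, ?_⟩
  · rw [← hN'.inf_eq_bot]
    exact le_inf inf_le_right (inf_le_left.trans inf_le_left)
  · rw [sup_comm, ← sup_inf_assoc_of_le N' hT, hN'.sup_eq_top, top_inf_eq]

lemma exists_proj (V N : Submodule K W) (h : V ⊓ N ≤ ⊥) :
    ∃ f : W →ₗ[K] W, (∀ v ∈ V, f v = v) ∧ (∀ n ∈ N, f n = 0) := by
  have hinj : LinearMap.ker (N.mkQ ∘ₗ V.subtype) = ⊥ := by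
    rw [eq_bot_iff]
    rintro ⟨x, hx⟩ h1
    have : x ∈ N := by simpa using h1
    have := h ⟨hx, this⟩
    simpa using this
  obtain ⟨q, hq⟩ := LinearMap.exists_leftInverse_of_injective _ hinj
  refine ⟨V.subtype ∘ₗ q ∘ₗ N.mkQ, fun v hv => ?_, fun n hn => ?_⟩
  · have := congrArg Subtype.val (LinearMap.congr_fun hq ⟨v, hv⟩)
    simpa using this
  · have : N.mkQ n = 0 := by simpa using hn
    simp only [LinearMap.comp_apply, this, map_zero]

/-- Same complex, zero bracket. -/
def zeroBr {L : Type v} [AddCommGroup L] [Module K L] (g : DGLAStruct K L) : DGLAStruct K L where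
  toCochainStruct := g.toCochainStruct
  bracket := 0
  bracket_degree := by intros; simp
  bracket_skew := by intros; simp
  bracket_jacobi := by intros; simp
  bracket_leibniz := by intros; simp

theorem hlemma {A : Type u} [AddCommGroup A] [Module K A] (g : DGLAStruct K A)
    (S : PreDGLA K W) (H C : ℤ → Submodule K W)
    (hH : ∀ i, H i ≤ S.G i)
    (hC : ∀ i, C i ≤ H i)
    (hdC : ∀ i, ∀ x ∈ H i, S.d x ∈ C (i + 1))
    (hbC : ∀ i j, ∀ x ∈ H i, ∀ y ∈ H j, S.br x y ∈ C (i + j))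
    (hex : ∀ i, ∀ c ∈ C i, S.d c = 0 → ∃ z ∈ H (i - 1), S.d z = c)
    (p : W →ₗ[K] A)
    (hpg : ∀ i, ∀ x ∈ H i, p x ∈ g.grading i)
    (hpd : ∀ i, ∀ x ∈ H i, p (S.d x) = g.d (p x))
    (hpb : ∀ i j, ∀ x ∈ H i, ∀ y ∈ H j, p (S.br x y) = g.bracket (p x) (p y))
    (hps : ∀ i, ∀ a ∈ g.grading i, g.d a = 0 → ∃ x ∈ H i, S.d x = 0 ∧ p x = a) :
    DGLA.HomotopyAbelian (DGLA.mk (K := K) A g) := by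
  let Z : ℤ → Submodule K W := fun i => H i ⊓ LinearMap.ker S.d
  let T : ℤ → Submodule K W := fun i => Z i ⊓ (LinearMap.range g.d).comap p
  choose N hCN hNH hHN hNZ using fun i => exists_between (C i) (Z i) (H i) (hC i) inf_le_left
  choose V hVZ hVT hZV using fun i => exists_compl_in (T i) (Z i) inf_le_left
  have hNex : ∀ i, ∀ c ∈ N i, S.d c = 0 → ∃ z ∈ N (i - 1), S.d z = c := by
    intro i c hc hdc
    obtain ⟨z, hz, rfl⟩ := hex i c (hNZ i ⟨hc, hNH i hc, hdc⟩) hdc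
    obtain ⟨n, hn, ζ, hζ, rfl⟩ := Submodule.mem_sup.mp (hHN _ hz)
    refine ⟨n, hn, ?_⟩
    have : S.d ζ = 0 := hζ.2
    rw [map_add, this, add_zero]
  have hVN : ∀ i, V i ⊓ N i ≤ ⊥ := by
    rintro i v ⟨hv, hn⟩
    have hvz := hVZ i hv
    refine hVT i ⟨hv, hvz, ?_⟩
    obtain ⟨z, hz, rfl⟩ := hNex i v hn hvz.2
    exact ⟨p z, (hpd _ z (hNH _ hz)).symm⟩
  let H' : ℤ → Submodule K W := fun i => V i ⊔ N i
  have hH'H : ∀ i, H' i ≤ H i := fun i => sup_le ((hVZ i).trans inf_le_left) (hNH i)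
  have hCH' : ∀ i, C i ≤ H' i := fun i => (hCN i).trans le_sup_right
  let Q : DGLAStruct K ↥(⨆ i, H' i) := subDGLA S H' (fun i => (hH'H i).trans (hH i))
    (fun i x hx => hCH' _ (hdC i x (hH'H i hx)))
    (fun i j x hx y hy => hCH' _ (hbC i j x (hH'H i hx) y (hH'H j hy)))
  have hmem : ∀ i, ∀ x ∈ H' i, x ∈ ⨆ i, H' i := fun i x hx => Submodule.mem_iSup_of_mem i hx
  -- the map to g
  let P : DGLAStructHom Q g :=
    { toFun := p.comp (⨆ i, H' i).subtype
      map_grading := fun i x hx => hpg i x (hH'H i hx)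
      map_d := fun x => by
        have := map_iSup (H := H') (p ∘ₗ S.d - g.d ∘ₗ p) ⊥ (fun i x hx => by
          simp [hpd i x (hH'H i hx)]) x x.2
        simpa [sub_eq_zero] using! this
      map_bracket := fun x y => by
        have := map_iSup₂ (H := H') (S.br.compr₂ p - g.bracket.compl₁₂ p p) ⊥
          (fun i j x hx y hy => by
          simp [hpb i j x (hH'H i hx) y (hH'H j hy)]) x x.2 y y.2
        simpa [sub_eq_zero] using! this }
  choose f hfV hfN using fun i => exists_proj (V i) (N i) (hVN i)
  have hfH : ∀ i, ∀ x ∈ H' i, f i x ∈ V i := by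
    intro i x hx
    obtain ⟨v, hv, n, hn, rfl⟩ := Submodule.mem_sup.mp hx
    rw [map_add, hfV i v hv, hfN i n hn, add_zero]; exact hv
  let φ : ∀ i, ↥(Q.grading i) →ₗ[K] ↥(⨆ i, H' i) := fun i =>
    LinearMap.codRestrict (⨆ i, H' i) ((f i) ∘ₗ (⨆ i, H' i).subtype ∘ₗ (Q.grading i).subtype)
      (fun x => hmem i _ (le_sup_left (a := V i) (b := N i) (hfH i _ x.2)))
  obtain ⟨F, hF⟩ := exists_of_internal Q.isInternal φ
  have hF' : ∀ i, ∀ x : ↥(⨆ i, H' i), (hx : (x : W) ∈ H' i) → (F x : W) = f i x := by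
    intro i x hx
    exact congrArg Subtype.val (hF i ⟨x, hx⟩)
  have hFC : ∀ i, ∀ x : ↥(⨆ i, H' i), (hx : (x : W) ∈ C i) → F x = 0 := by
    intro i x hx
    ext
    rw [hF' i x (hCH' i hx), hfN i _ (hCN i hx)]; rfl
  have hFd : ∀ x, F (Q.d x) = 0 := by
    intro x
    have : F ∘ₗ Q.d = 0 := iSup_ext (fun i x hx => by
      simpa using hFC (i + 1) (Q.d x) (hdC i x (hH'H i hx)))
    exact LinearMap.congr_fun this x
  have hdF : ∀ x, Q.d (F x) = 0 := by
    intro x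
    have : Q.d ∘ₗ F = 0 := iSup_ext (fun i x hx => by
      ext
      change S.d (F x : W) = 0
      rw [hF' i x hx]
      exact (hVZ i (hfH i x hx)).2)
    exact LinearMap.congr_fun this x
  have hFb : ∀ x y, F (Q.bracket x y) = 0 := by
    intro x y
    have : Q.bracket.compr₂ F = 0 := iSup_ext (fun i x hx => iSup_ext (fun j y hy => by
      simpa using hFC (i + j) (Q.bracket x y) (hbC i j x (hH'H i hx) y (hH'H j hy))))
    exact LinearMap.congr_fun (LinearMap.congr_fun this x) y
  let R : DGLAStructHom Q (zeroBr Q) :=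
    { toFun := F
      map_grading := fun i x hx => by
        change (F x : W) ∈ H' i
        rw [hF' i x hx]
        exact le_sup_left (a := V i) (b := N i) (hfH i _ hx)
      map_d := fun x => (hFd x).trans (hdF x).symm
      map_bracket := fun x y => by rw [hFb]; rfl }
  have hNQ : ∀ i, ∀ x : ↥(⨆ i, H' i), (x : W) ∈ N i → Q.d x = 0 → ∃ z, Q.d z = x := by
    intro i x hx hdx
    obtain ⟨z, hz, h⟩ := hNex i x hx (congrArg Subtype.val hdx)
    exact ⟨⟨z, hmem _ z (le_sup_right (a := V _) hz)⟩, Subtype.ext h⟩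
  refine ⟨DGLA.mk (K := K) _ (zeroBr Q), fun x y => rfl, ?_⟩
  refine Relation.EqvGen.trans _ (DGLA.mk (K := K) _ Q) _
    (Relation.EqvGen.symm _ _ (Relation.EqvGen.rel _ _ ⟨P, ?_⟩))
    (Relation.EqvGen.rel _ _ ⟨R, ?_⟩)
  · refine isQuasiIso_of P ?_ ?_
    · intro i x hx hdx ⟨y, hy⟩
      obtain ⟨v, hv, n, hn, hvn⟩ := Submodule.mem_sup.mp (show (x : W) ∈ V i ⊔ N i from hx)
      have hdx' : S.d (x : W) = 0 := congrArg Subtype.val hdx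
      have hdv : S.d v = 0 := (hVZ i hv).2
      have hdn : S.d n = 0 := by rw [← hvn, map_add, hdv, zero_add] at hdx'; exact hdx'
      obtain ⟨z, hz, rfl⟩ := hNex i n hn hdn
      have hv0 : v = 0 := by
        refine hVT i ⟨hv, hVZ i hv, ⟨y - p z, ?_⟩⟩
        have h1 : g.d y = p (x : W) := hy
        rw [map_sub, h1, ← hvn, map_add, hpd _ z (hNH _ hz), add_sub_cancel_right]
      refine hNQ i x ?_ hdx
      rw [← hvn, hv0, zero_add]; exact hn
    · intro i y hy hdy
      obtain ⟨x, hx, hdx, rfl⟩ := hps i y hy hdy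
      obtain ⟨v, hv, τ, hτ, rfl⟩ := Submodule.mem_sup.mp (hZV i ⟨hx, hdx⟩)
      refine ⟨⟨v, hmem i v (le_sup_left (a := V _) hv)⟩, le_sup_left (a := V i) (b := N i) hv,
        Subtype.ext (hVZ i hv).2, ?_⟩
      obtain ⟨z, hz⟩ := hτ.2
      refine ⟨-z, ?_⟩
      change g.d (-z) = p v - p (v + τ)
      rw [map_neg, hz, map_add]; abel
  · refine isQuasiIso_of R ?_ ?_
    · intro i x hx hdx ⟨y, hy⟩
      obtain ⟨v, hv, n, hn, hvn⟩ := Submodule.mem_sup.mp (show (x : W) ∈ V i ⊔ N i from hx)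
      have h1 : (F x : W) = v := by
        rw [hF' i x hx, ← hvn, map_add, hfV i v hv, hfN i n hn, add_zero]
      have h2 : F (F x) = 0 := by
        have : Q.d y = F x := hy
        rw [← this, hFd]
      have h3 : (F (F x) : W) = v := by
        rw [hF' i (F x) (by rw [h1]; exact le_sup_left (a := V i) (b := N i) hv), h1, hfV i v hv]
      have hv0 : v = 0 := by rw [← h3, h2]; rfl
      refine hNQ i x ?_ hdx
      rw [← hvn, hv0, zero_add]; exact hn
    · intro i y hy hdy
      obtain ⟨v, hv, n, hn, hvn⟩ := Submodule.mem_sup.mp (show (y : W) ∈ V i ⊔ N i from hy)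
      have hvH : v ∈ H' i := le_sup_left (a := V i) (b := N i) hv
      let v' : ↥(⨆ i, H' i) := ⟨v, hmem i v hvH⟩
      have hFv : F v' = v' := Subtype.ext ((hF' i v' hvH).trans (hfV i v hv))
      have hdv : Q.d v' = 0 := Subtype.ext (hVZ i hv).2
      refine ⟨v', hvH, hdv, ?_⟩
      obtain ⟨z, hz⟩ := hNQ i (y - v') (by
        change (y : W) - v ∈ N i
        rw [← hvn, add_sub_cancel_left]; exact hn) (by
          have : Q.d y = 0 := hdy
          rw [map_sub, this, hdv, sub_zero])
      refine ⟨-z, ?_⟩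
      change Q.d (-z) = F v' - y
      rw [map_neg, hz, hFv]; abel

end hl
end BVProof

set_option linter.all false
set_option linter.unusedSimpArgs false
namespace BVProof
open scoped TensorProduct
open Polynomial

lemma indep_of_maps {K : Type u} [Field K] {W : Type v} [AddCommGroup W] [Module K W]
    {Q : Type*} {V : Q → Type*} [∀ q, AddCommGroup (V q)] [∀ q, Module K (V q)]
    (G : ℤ → Submodule K W) (φ : ∀ q, W →ₗ[K] V q) (F : ∀ q, ℤ → Submodule K (V q))
    (hF : ∀ q, iSupIndep (F q)) (hφ : ∀ q i, ∀ x ∈ G i, φ q x ∈ F q i)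
    (hinj : ∀ i, ∀ x ∈ G i, (∀ q, φ q x = 0) → x = 0) : iSupIndep G := by
  rw [iSupIndep_iff_finsetSum_eq_zero_imp_eq_zero]
  intro s v hv hs i hi
  refine hinj i _ (hv i hi) fun q => ?_
  refine (iSupIndep_iff_finsetSum_eq_zero_imp_eq_zero _).mp (hF q) s (fun i => φ q (v i))
    (fun i hi => hφ q i _ (hv i hi)) ?_ i hi
  rw [← map_sum, hs, map_zero]

lemma sgn {K : Type u} [Field K] (n : ℤ) : (-1 : K) ^ n = if Even n then 1 else -1 := by
  split_ifs with h
  · exact h.neg_one_zpow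
  · exact (Int.not_even_iff_odd.mp h).neg_one_zpow

section tens
variable {K : Type u} [Field K] {V : Type u} [AddCommGroup V] [Module K V]

/-- Polynomials with coefficients in `N`. -/
noncomputable def GT (N : Submodule K V) : Submodule K (K[X] ⊗[K] V) :=
  Submodule.map₂ (TensorProduct.mk K K[X] V) ⊤ N

lemma tmul_mem_GT {N : Submodule K V} (p : K[X]) {v : V} (hv : v ∈ N) : p ⊗ₜ[K] v ∈ GT N :=
  Submodule.apply_mem_map₂ (TensorProduct.mk K K[X] V) trivial hv

lemma GT_map {X : Type*} [AddCommGroup X] [Module K X] {N : Submodule K V}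
    (f : (K[X] ⊗[K] V) →ₗ[K] X) (P : Submodule K X)
    (h : ∀ p : K[X], ∀ v ∈ N, f (p ⊗ₜ v) ∈ P) : ∀ x ∈ GT N, f x ∈ P := by
  have : GT N ≤ P.comap f := Submodule.map₂_le.mpr fun p _ v hv => h p v hv
  exact this

lemma GT_eq {X : Type*} [AddCommGroup X] [Module K X] {N : Submodule K V}
    (f g : (K[X] ⊗[K] V) →ₗ[K] X)
    (h : ∀ p : K[X], ∀ v ∈ N, f (p ⊗ₜ v) = g (p ⊗ₜ v)) : ∀ x ∈ GT N, f x = g x := by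
  intro x hx
  have := GT_map (f - g) ⊥ (fun p v hv => by simp [h p v hv]) x hx
  simpa [sub_eq_zero] using this

/-- bracket extended to polynomials -/
noncomputable def brT (br : V →ₗ[K] V →ₗ[K] V) :
    (K[X] ⊗[K] V) →ₗ[K] (K[X] ⊗[K] V) →ₗ[K] (K[X] ⊗[K] V) :=
  TensorProduct.map₂ (LinearMap.mul K K[X]) br

@[simp] lemma brT_tmul (br : V →ₗ[K] V →ₗ[K] V) (p q : K[X]) (x y : V) :
    brT br (p ⊗ₜ x) (q ⊗ₜ y) = (p * q) ⊗ₜ br x y := by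
  simp [brT]

/-- Polynomial extension of a PreDGLA. -/
noncomputable def tens (S : PreDGLA K V) : PreDGLA K (K[X] ⊗[K] V) where
  G i := GT (S.G i)
  indep := by
    refine indep_of_maps (Q := ℕ) (V := fun _ => V) _
      (fun n => (Finsupp.lapply n) ∘ₗ
        (TensorProduct.equivFinsuppOfBasisLeft (Polynomial.basisMonomials K)).toLinearMap)
      (fun _ => S.G) (fun _ => S.indep) ?_ ?_
    · intro n i
      refine GT_map _ _ fun p v hv => ?_
      simp only [LinearMap.comp_apply, Finsupp.lapply_apply, LinearEquiv.coe_coe,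
        TensorProduct.equivFinsuppOfBasisLeft_apply_tmul_apply]
      exact Submodule.smul_mem _ _ hv
    · intro i x _ h
      rw [← (TensorProduct.equivFinsuppOfBasisLeft (Polynomial.basisMonomials K)).map_eq_zero_iff]
      ext n
      exact h n
  d := S.d.lTensor K[X]
  br := brT S.br
  τ := S.τ.lTensor K[X]
  tau_eq i := by
    refine GT_eq (S.τ.lTensor K[X]) (((-1 : K) ^ i) • LinearMap.id) fun p v hv => ?_
    simp [S.tau_eq i v hv]
  d_deg i := GT_map (S.d.lTensor K[X]) _ fun p v hv => by
    simpa using tmul_mem_GT p (S.d_deg i v hv)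
  d_sq i := by
    refine GT_eq (S.d.lTensor K[X] ∘ₗ S.d.lTensor K[X]) 0 fun p v hv => ?_
    simp [S.d_sq i v hv]
  br_deg i j x hx y hy := by
    refine GT_map ((brT S.br).flip y) _ (fun p v hv => ?_) x hx
    refine GT_map (brT S.br (p ⊗ₜ v)) _ (fun q w hw => ?_) y hy
    simpa using tmul_mem_GT _ (S.br_deg i j v hv w hw)
  skew i j x hx y hy := by
    refine GT_eq ((brT S.br).flip y) (-(((-1 : K) ^ (i * j)) • brT S.br y)) (fun p v hv => ?_) x hx
    refine GT_eq (brT S.br (p ⊗ₜ v)) (-(((-1 : K) ^ (i * j)) • (brT S.br).flip (p ⊗ₜ v)))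
      (fun q w hw => ?_) y hy
    simp only [brT_tmul, LinearMap.neg_apply, LinearMap.smul_apply, LinearMap.flip_apply]
    rw [S.skew i j v hv w hw, mul_comm, TensorProduct.tmul_neg, TensorProduct.tmul_smul]
  jac i j l x hx y hy z hz := by
    let b := brT S.br
    refine GT_eq (b.flip (b y z)) (b.flip z ∘ₗ b.flip y + ((-1 : K) ^ (i * j)) • b y ∘ₗ b.flip z)
      (fun p u hu => ?_) x hx
    refine GT_eq (b (p ⊗ₜ u) ∘ₗ b.flip z)
      (b.flip z ∘ₗ b (p ⊗ₜ u) + ((-1 : K) ^ (i * j)) • b.flip (b (p ⊗ₜ u) z))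
      (fun q v hv => ?_) y hy
    refine GT_eq (b (p ⊗ₜ u) ∘ₗ b (q ⊗ₜ v))
      (b (b (p ⊗ₜ u) (q ⊗ₜ v)) + ((-1 : K) ^ (i * j)) • b (q ⊗ₜ v) ∘ₗ b (p ⊗ₜ u))
      (fun r w hw => ?_) z hz
    simp only [b, brT_tmul, LinearMap.add_apply, LinearMap.smul_apply, LinearMap.comp_apply]
    rw [S.jac i j l u hu v hv w hw, TensorProduct.tmul_add, TensorProduct.tmul_smul, mul_assoc,
      mul_left_comm]
  leib i j x hx y hy := by
    let b := brT S.br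
    let D := S.d.lTensor K[X]
    refine GT_eq (D ∘ₗ b.flip y) (b.flip y ∘ₗ D + ((-1 : K) ^ i) • b.flip (D y))
      (fun p u hu => ?_) x hx
    refine GT_eq (D ∘ₗ b (p ⊗ₜ u)) (b (D (p ⊗ₜ u)) + ((-1 : K) ^ i) • b (p ⊗ₜ u) ∘ₗ D)
      (fun q v hv => ?_) y hy
    simp only [b, D, brT_tmul, LinearMap.add_apply, LinearMap.smul_apply, LinearMap.comp_apply,
      LinearMap.lTensor_tmul]
    rw [S.leib i j u hu v hv, TensorProduct.tmul_add, TensorProduct.tmul_smul]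

/-- derivative in the polynomial variable -/
noncomputable def pD : (K[X] ⊗[K] V) →ₗ[K] (K[X] ⊗[K] V) :=
  (Polynomial.derivative (R := K)).rTensor V

@[simp] lemma pD_tmul (p : K[X]) (v : V) : pD (p ⊗ₜ[K] v) = (derivative p) ⊗ₜ v := by
  simp [pD]

lemma pD_br (br : V →ₗ[K] V →ₗ[K] V) (x y : K[X] ⊗[K] V) :
    pD (brT br x y) = brT br (pD x) y + brT br x (pD y) := by
  induction x using TensorProduct.induction_on with
  | zero => simp
  | add a b ha hb => simp only [map_add, LinearMap.add_apply, ha, hb]; abel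
  | tmul p u =>
    induction y using TensorProduct.induction_on with
    | zero => simp
    | add a b ha hb => simp only [map_add, ha, hb]; abel
    | tmul q v => simp [TensorProduct.add_tmul]

lemma pD_d (d : V →ₗ[K] V) (x : K[X] ⊗[K] V) :
    pD (d.lTensor K[X] x) = d.lTensor K[X] (pD x) := by
  induction x using TensorProduct.induction_on with
  | zero => simp
  | add a b ha hb => simp only [map_add, ha, hb]
  | tmul p u => simp

lemma pD_mem {N : Submodule K V} : ∀ x ∈ GT N, pD x ∈ GT N :=
  GT_map _ _ fun p v hv => by simpa using tmul_mem_GT _ hv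

end tens

section path
variable {K : Type u} [Field K] {V : Type u} [AddCommGroup V] [Module K V]

/-- Adjoin `ds` to a PreDGLA with a derivation. -/
def dsExt (S : PreDGLA K V) (P : V →ₗ[K] V) (hP : ∀ i, ∀ x ∈ S.G i, P x ∈ S.G i)
    (hPd : ∀ x, P (S.d x) = S.d (P x))
    (hPb : ∀ x y, P (S.br x y) = S.br (P x) y + S.br x (P y)) : PreDGLA K (V × V) where
  G n := (S.G n).prod (S.G (n - 1))
  indep := by
    refine indep_of_maps (Q := Bool) (V := fun _ => V) _
      (fun b => if b then LinearMap.fst K V V else LinearMap.snd K V V)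
      (fun b => if b then S.G else S.G ∘ (fun n => n - 1)) ?_ ?_ ?_
    · rintro (_ | _)
      · exact S.indep.comp (sub_left_injective)
      · exact S.indep
    · rintro (_ | _) i x hx
      · exact hx.2
      · exact hx.1
    · rintro i ⟨x, y⟩ hx h
      exact Prod.ext (h true) (h false)
  d :=
    { toFun := fun x => (S.d x.1, P x.1 - S.d x.2)
      map_add' := by intros; ext <;> simp; abel
      map_smul' := by intros; ext <;> simp [smul_sub] }
  br := LinearMap.mk₂ K (fun x y => (S.br x.1 y.1, S.br x.2 y.1 + S.br (S.τ x.1) y.2))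
    (by intros; ext <;> simp; abel) (by intros; ext <;> simp)
    (by intros; ext <;> simp; abel) (by intros; ext <;> simp)
  τ := LinearMap.prodMap S.τ (-S.τ)
  tau_eq := by
    rintro i ⟨x, y⟩ ⟨hx, hy⟩
    by_cases hi : Even i <;>
    simp only [LinearMap.prodMap_apply, LinearMap.neg_apply, S.tau_eq i x hx, S.tau_eq _ y hy,
      sgn, hi, Int.even_sub, Int.even_add, Int.even_mul, Int.not_even_one, iff_true,
        iff_false, true_iff, false_iff, not_true_eq_false, not_false_eq_true, or_true, or_false,
        true_or, false_or, if_true, if_false] <;> simp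
  d_deg := by
    rintro i ⟨x, y⟩ ⟨hx, hy⟩
    refine ⟨S.d_deg i x hx, ?_⟩
    have h1 := hP i x hx
    have h2 := S.d_deg _ y hy
    simp only [add_sub_cancel_right, sub_add_cancel] at h1 h2 ⊢
    exact sub_mem h1 h2
  d_sq := by
    rintro i ⟨x, y⟩ ⟨hx, hy⟩
    simp [S.d_sq i x hx, S.d_sq _ y hy, hPd]
  br_deg := by
    rintro i j ⟨x, y⟩ ⟨hx, hy⟩ ⟨x', y'⟩ ⟨hx', hy'⟩
    refine ⟨S.br_deg i j x hx x' hx', ?_⟩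
    have h1 := S.br_deg _ _ y hy x' hx'
    have h2 := S.br_deg _ _ x hx y' hy'
    rw [show i - 1 + j = i + j - 1 by ring] at h1
    rw [show i + (j - 1) = i + j - 1 by ring] at h2
    simp only [LinearMap.mk₂_apply] at h1 h2 ⊢
    rw [S.tau_eq i x hx]
    refine add_mem h1 ?_
    simpa using Submodule.smul_mem _ _ h2
  skew := by
    rintro i j ⟨x, y⟩ ⟨hx, hy⟩ ⟨x', y'⟩ ⟨hx', hy'⟩
    have h0 := S.skew i j x hx x' hx'
    have h1 := S.skew _ _ y hy x' hx'
    have h2 := S.skew _ _ x hx y' hy'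
    ext
    · simpa using h0
    · simp only [LinearMap.mk₂_apply, Prod.snd_neg, Prod.smul_snd, S.tau_eq i x hx,
        S.tau_eq j x' hx', map_smul, LinearMap.smul_apply, h1, h2]
      by_cases hi : Even i <;> by_cases hj : Even j <;>
      simp only [sgn, hi, hj, Int.even_sub, Int.even_add, Int.even_mul, Int.not_even_one, iff_true,
        iff_false, true_iff, false_iff, not_true_eq_false, not_false_eq_true, or_true, or_false,
        true_or, false_or, if_true, if_false] <;> module
  jac := by
    rintro i j l ⟨x, y⟩ ⟨hx, hy⟩ ⟨x', y'⟩ ⟨hx', hy'⟩ ⟨x'', y''⟩ ⟨hx'', hy''⟩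
    have h0 := S.jac i j l x hx x' hx' x'' hx''
    have h1 := S.jac _ _ _ y hy x' hx' x'' hx''
    have h2 := S.jac _ _ _ x hx y' hy' x'' hx''
    have h3 := S.jac _ _ _ x hx x' hx' y'' hy''
    ext
    · simpa using h0
    · simp only [LinearMap.mk₂_apply, Prod.snd_add, Prod.smul_snd, S.tau_eq i x hx,
        S.tau_eq j x' hx', S.tau_eq _ _ (S.br_deg i j x hx x' hx'), map_smul, map_add, 
        LinearMap.smul_apply, LinearMap.add_apply, h1, h2, h3]
      by_cases hi : Even i <;> by_cases hj : Even j <;>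
      simp only [sgn, hi, hj, Int.even_sub, Int.even_add, Int.even_mul, Int.not_even_one, iff_true,
        iff_false, true_iff, false_iff, not_true_eq_false, not_false_eq_true, or_true, or_false,
        true_or, false_or, if_true, if_false] <;> module
  leib := by
    rintro i j ⟨x, y⟩ ⟨hx, hy⟩ ⟨x', y'⟩ ⟨hx', hy'⟩
    have h0 := S.leib i j x hx x' hx'
    have h1 := S.leib _ _ y hy x' hx'
    have h2 := S.leib _ _ x hx y' hy'
    ext
    · simpa using h0
    · simp only [LinearMap.mk₂_apply, Prod.snd_add, Prod.smul_snd, S.tau_eq i x hx,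
        S.tau_eq _ _ (S.d_deg i x hx), map_smul, map_add, LinearMap.coe_mk, AddHom.coe_mk,
        LinearMap.sub_apply, map_sub, LinearMap.comp_apply, LinearMap.fst_apply,
        LinearMap.snd_apply, hPb,
        LinearMap.smul_apply, LinearMap.add_apply, h1, h2]
      by_cases hi : Even i <;>
      simp only [sgn, hi, Int.even_sub, Int.even_add, Int.even_mul, Int.not_even_one, iff_true,
        iff_false, true_iff, false_iff, not_true_eq_false, not_false_eq_true, or_true, or_false,
        true_or, false_or, if_true, if_false] <;> module

end path
end BVProof

set_option linter.all false
set_option linter.unusedSimpArgs false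
namespace BVProof
open scoped TensorProduct
open Polynomial

section evs
variable {K : Type u} [Field K] {V : Type u} [AddCommGroup V] [Module K V]

/-- evaluation of polynomials with coefficients in `V` -/
noncomputable def ev (r : K) : (K[X] ⊗[K] V) →ₗ[K] V :=
  (TensorProduct.lid K V).toLinearMap ∘ₗ (Polynomial.leval r).rTensor V

@[simp] lemma ev_tmul (r : K) (p : K[X]) (v : V) : ev r (p ⊗ₜ[K] v) = p.eval r • v := by
  simp [ev]

lemma ev_mem {N : Submodule K V} (r : K) : ∀ x ∈ GT N, ev r x ∈ N :=
  GT_map _ _ fun p v hv => by simpa using Submodule.smul_mem _ _ hv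

lemma ev_d (r : K) (d : V →ₗ[K] V) (x : K[X] ⊗[K] V) :
    ev r (d.lTensor K[X] x) = d (ev r x) := by
  induction x using TensorProduct.induction_on with
  | zero => simp
  | add a b ha hb => simp only [map_add, ha, hb]
  | tmul p u => simp

lemma ev_br (r : K) (br : V →ₗ[K] V →ₗ[K] V) (x y : K[X] ⊗[K] V) :
    ev r (brT br x y) = br (ev r x) (ev r y) := by
  induction x using TensorProduct.induction_on with
  | zero => simp
  | add a b ha hb => simp only [map_add, LinearMap.add_apply, ha, hb]
  | tmul p u =>
    induction y using TensorProduct.induction_on with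
    | zero => simp
    | add a b ha hb => simp only [map_add, ha, hb]
    | tmul q v =>
      simp only [brT_tmul, ev_tmul, eval_mul, map_smul, LinearMap.smul_apply, mul_smul]
      rw [smul_comm]

/-- formal integral of polynomials -/
noncomputable def polyInt (K : Type u) [Field K] : K[X] →ₗ[K] K[X] :=
  (Polynomial.basisMonomials K).constr K (fun n => monomial (n + 1) ((n + 1 : K)⁻¹))

lemma polyInt_monomial (n : ℕ) : polyInt K (monomial n 1) = monomial (n + 1) ((n + 1 : K)⁻¹) := by
  have := (Polynomial.basisMonomials K).constr_basis K
    (fun n => monomial (n + 1) ((n + 1 : K)⁻¹)) n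
  simpa [polyInt] using this

lemma polyInt_eval (p : K[X]) : (polyInt K p).eval 0 = 0 := by
  have : (Polynomial.leval (0 : K)) ∘ₗ polyInt K = 0 := by
    refine (Polynomial.basisMonomials K).ext fun n => ?_
    simp [polyInt_monomial]
  exact LinearMap.congr_fun this p

lemma der_polyInt [CharZero K] (p : K[X]) : derivative (polyInt K p) = p := by
  have : (derivative (R := K)) ∘ₗ polyInt K = LinearMap.id := by
    refine (Polynomial.basisMonomials K).ext fun n => ?_
    have h : (n + 1 : K) ≠ 0 := by exact_mod_cast Nat.succ_ne_zero n
    simp [polyInt_monomial, derivative_monomial, h]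
  exact LinearMap.congr_fun this p

lemma polyInt_der [CharZero K] (p : K[X]) : polyInt K (derivative p) = p - C (p.eval 0) := by
  have : polyInt K ∘ₗ (derivative (R := K)) =
      LinearMap.id - (Polynomial.monomial 0) ∘ₗ (Polynomial.leval (0 : K)) := by
    refine (Polynomial.basisMonomials K).ext fun n => ?_
    rcases n with _ | n
    · simp
    · have h : (n + 1 : K) ≠ 0 := by exact_mod_cast Nat.succ_ne_zero n
      have e : (monomial n ((n : K) + 1)) = ((n : K) + 1) • monomial n (1 : K) := by
        simp [smul_monomial]
      simp only [LinearMap.comp_apply, coe_basisMonomials, derivative_monomial, Nat.cast_add,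
        Nat.cast_one, one_mul, Nat.add_sub_cancel,
        LinearMap.sub_apply, LinearMap.id_apply, leval_apply, smul_eq_mul]
      rw [e, map_smul, polyInt_monomial, smul_monomial]
      simp [h]
  simpa using LinearMap.congr_fun this p

/-- integral with coefficients -/
noncomputable def pI : (K[X] ⊗[K] V) →ₗ[K] (K[X] ⊗[K] V) := (polyInt K).rTensor V

lemma pI_mem {N : Submodule K V} : ∀ x ∈ GT N, pI x ∈ GT N :=
  GT_map _ _ fun p v hv => by simpa [pI] using tmul_mem_GT _ hv

lemma pI_d (d : V →ₗ[K] V) (x : K[X] ⊗[K] V) :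
    pI (d.lTensor K[X] x) = d.lTensor K[X] (pI x) := by
  induction x using TensorProduct.induction_on with
  | zero => simp
  | add a b ha hb => simp only [map_add, ha, hb]
  | tmul p u => simp [pI]

lemma pD_pI [CharZero K] (x : K[X] ⊗[K] V) : pD (pI x) = x := by
  induction x using TensorProduct.induction_on with
  | zero => simp
  | add a b ha hb => simp only [map_add, ha, hb]
  | tmul p u => simp [pI, der_polyInt]

lemma pI_pD [CharZero K] (x : K[X] ⊗[K] V) : pI (pD x) = x - 1 ⊗ₜ ev 0 x := by
  induction x using TensorProduct.induction_on with
  | zero => simp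
  | add a b ha hb => simp only [map_add, ha, hb, TensorProduct.tmul_add]; abel
  | tmul p u =>
    simp only [pI, pD_tmul, LinearMap.rTensor_tmul, polyInt_der, ev_tmul, TensorProduct.sub_tmul]
    rw [TensorProduct.tmul_smul, TensorProduct.smul_tmul', Polynomial.smul_eq_C_mul, mul_one]

lemma ev_pI (x : K[X] ⊗[K] V) : ev 0 (pI x) = 0 := by
  induction x using TensorProduct.induction_on with
  | zero => simp
  | add a b ha hb => simp only [map_add, ha, hb, add_zero]
  | tmul p u => simp [pI, polyInt_eval]

/-- path object -/
noncomputable def path (S : PreDGLA K V) : PreDGLA K ((K[X] ⊗[K] V) × (K[X] ⊗[K] V)) :=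
  dsExt (tens S) pD (fun i => pD_mem) (pD_d S.d) (pD_br S.br)

theorem pathlemma [CharZero K] {A : Type u} [AddCommGroup A] [Module K A] (g : DGLAStruct K A)
    (S : PreDGLA K V) (M N : ℤ → Submodule K V)
    (hM : ∀ i, M i ≤ S.G i) (hN : ∀ i, N i ≤ S.G i)
    (hMd : ∀ i, ∀ x ∈ M i, S.d x ∈ M (i + 1)) (hNd : ∀ i, ∀ x ∈ N i, S.d x ∈ N (i + 1))
    (hMb : ∀ i j, ∀ x ∈ M i, ∀ y ∈ M j, S.br x y = 0)
    (hNb : ∀ i j, ∀ x ∈ N i, ∀ y ∈ N j, S.br x y ∈ N (i + j))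
    (π : V →ₗ[K] A)
    (hπg : ∀ i, ∀ x ∈ N i, π x ∈ g.grading i)
    (hπd : ∀ i, ∀ x ∈ N i, π (S.d x) = g.d (π x))
    (hπb : ∀ i j, ∀ x ∈ N i, ∀ y ∈ N j, π (S.br x y) = g.bracket (π x) (π y))
    (ha : ∀ i, ∀ x ∈ S.G i, S.d x = 0 → ∃ c ∈ M i, ∃ e ∈ S.G (i - 1), x = c + S.d e)
    (hb : ∀ i, ∀ x ∈ N i, ∀ e ∈ S.G (i - 1), S.d e = x → ∃ q ∈ N (i - 1), S.d q = x)
    (hc : ∀ i, ∀ a ∈ g.grading i, g.d a = 0 → ∃ x ∈ N i, S.d x = 0 ∧ π x = a) :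
    DGLA.HomotopyAbelian (DGLA.mk (K := K) A g) := by
  let T := K[X] ⊗[K] V
  let H : ℤ → Submodule K (T × T) := fun i => (path S).G i ⊓
    ((M i).comap (ev 0 ∘ₗ LinearMap.fst K T T) ⊓ (N i).comap (ev 1 ∘ₗ LinearMap.fst K T T))
  let C : ℤ → Submodule K (T × T) := fun i => H i ⊓
    ((M (i - 1)).map S.d).comap (ev 0 ∘ₗ LinearMap.fst K T T)
  have hHd : ∀ i, ∀ x ∈ H i, (path S).d x ∈ H (i + 1) := by
    rintro i ⟨x, y⟩ ⟨h1, h2, h3⟩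
    refine ⟨(path S).d_deg i _ h1, ?_, ?_⟩
    · change ev 0 (S.d.lTensor K[X] x) ∈ M (i + 1)
      rw [ev_d]; exact hMd i _ h2
    · change ev 1 (S.d.lTensor K[X] x) ∈ N (i + 1)
      rw [ev_d]; exact hNd i _ h3
  have hHb : ∀ i j, ∀ x ∈ H i, ∀ y ∈ H j, (path S).br x y ∈ H (i + j) := by
    rintro i j ⟨x, y⟩ ⟨h1, h2, h3⟩ ⟨x', y'⟩ ⟨h1', h2', h3'⟩
    refine ⟨(path S).br_deg i j _ h1 _ h1', ?_, ?_⟩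
    · change ev 0 (brT S.br x x') ∈ M (i + j)
      rw [ev_br, hMb i j (ev 0 x) h2 (ev 0 x') h2']; exact zero_mem _
    · change ev 1 (brT S.br x x') ∈ N (i + j)
      rw [ev_br]; exact hNb i j _ h3 _ h3'
  refine hlemma g (path S) H C (fun i => inf_le_left) (fun i => inf_le_left) ?_ ?_ ?_
    (π ∘ₗ ev 1 ∘ₗ LinearMap.fst K T T) ?_ ?_ ?_ ?_
  · intro i x hx
    refine ⟨hHd i x hx, ?_⟩
    change ev 0 (S.d.lTensor K[X] x.1) ∈ (M (i + 1 - 1)).map S.d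
    rw [ev_d, add_sub_cancel_right]
    exact Submodule.mem_map_of_mem hx.2.1
  · intro i j x hx y hy
    refine ⟨hHb i j x hx y hy, ?_⟩
    change ev 0 (brT S.br x.1 y.1) ∈ (M (i + j - 1)).map S.d
    rw [ev_br, hMb i j (ev 0 x.1) hx.2.1 (ev 0 y.1) hy.2.1]; exact zero_mem _
  · rintro i ⟨f0, f1⟩ ⟨⟨⟨h1, h2⟩, h3, h4⟩, ⟨m, hm, hdm⟩⟩ hcl
    replace h1 : f0 ∈ GT (S.G i) := h1
    replace h2 : f1 ∈ GT (S.G (i - 1)) := h2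
    replace h4 : ev 1 f0 ∈ N i := h4
    replace hdm : S.d m = ev 0 f0 := hdm
    have hcl1 : S.d.lTensor K[X] f0 = 0 := congrArg Prod.fst hcl
    have hcl2 : pD f0 - S.d.lTensor K[X] f1 = 0 := congrArg Prod.snd hcl
    have hmG := hM _ hm
    obtain ⟨h, rfl⟩ : ∃ h, h = pI (f1 + 1 ⊗ₜ m) := ⟨_, rfl⟩
    have e0 : f1 + (1 : K[X]) ⊗ₜ[K] m ∈ GT (S.G (i - 1)) := add_mem h2 (tmul_mem_GT _ hmG)
    have e1 := pI_mem _ e0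
    have e2 := ev_pI (f1 + (1 : K[X]) ⊗ₜ[K] m)
    have e3 := pD_pI (f1 + (1 : K[X]) ⊗ₜ[K] m)
    have e4 : S.d.lTensor K[X] (pI (f1 + (1 : K[X]) ⊗ₜ[K] m)) =
        f0 - (1 - X : K[X]) ⊗ₜ S.d m := by
      have hX : pI ((1 : K[X]) ⊗ₜ[K] S.d m) = (X : K[X]) ⊗ₜ S.d m := by
        have := polyInt_monomial (K := K) 0
        simp only [monomial_zero_left, C_1, Nat.cast_zero, zero_add, inv_one, monomial_one_one_eq_X]
          at this
        simp [pI, this]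
      rw [← pI_d, map_add, ← sub_eq_zero.mp hcl2, map_add, pI_pD, LinearMap.lTensor_tmul, hX, ← hdm,
        TensorProduct.sub_tmul]
      abel
    set h := pI (f1 + (1 : K[X]) ⊗ₜ[K] m) with hh
    clear_value h
    have e5 : S.d (ev 1 h) = ev 1 f0 := by
      rw [← ev_d, e4]; simp
    obtain ⟨q, hq, hdq⟩ := hb i _ h4 _ (ev_mem 1 _ e1) e5
    obtain ⟨c, hc, e, he, hce⟩ := ha (i - 1) (ev 1 h - q) (sub_mem (ev_mem 1 _ e1) (hN _ hq))
      (by rw [map_sub, e5, hdq, sub_self])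
    have hdde := S.d_sq _ e he
    have hdc : S.d c = 0 := by
      have := congrArg S.d hce
      rw [map_add, hdde, map_sub, e5, hdq, sub_self, add_zero] at this
      exact this.symm
    have hde := S.d_deg _ e he
    rw [sub_add_cancel] at hde
    refine ⟨(h + (1 - X : K[X]) ⊗ₜ m - 1 ⊗ₜ c - X ⊗ₜ S.d e, - 1 ⊗ₜ e), ⟨⟨?_, ?_⟩, ?_, ?_⟩, ?_⟩
    · exact sub_mem (sub_mem (add_mem e1 (tmul_mem_GT _ hmG)) (tmul_mem_GT _ (hM _ hc)))
        (tmul_mem_GT _ hde)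
    · exact tmul_mem_GT _ he
    · change ev 0 (h + (1 - X : K[X]) ⊗ₜ m - 1 ⊗ₜ c - X ⊗ₜ S.d e) ∈ M (i - 1)
      simp only [map_sub, map_add, e2, ev_tmul]
      simpa using sub_mem hm hc
    · change ev 1 (h + (1 - X : K[X]) ⊗ₜ m - 1 ⊗ₜ c - X ⊗ₜ S.d e) ∈ N (i - 1)
      have : ev 1 (h + (1 - X : K[X]) ⊗ₜ m - 1 ⊗ₜ c - X ⊗ₜ S.d e) = q := by
        simp only [map_sub, map_add, ev_tmul]
        simp only [eval_sub, eval_one, eval_X, sub_self, zero_smul, add_zero, one_smul]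
        rw [sub_sub, ← hce]; abel
      rw [this]; exact hq
    · refine Prod.ext ?_ ?_
      · change S.d.lTensor K[X] (h + (1 - X : K[X]) ⊗ₜ m - 1 ⊗ₜ c - X ⊗ₜ S.d e) = f0
        simp only [map_add, map_sub, e4, LinearMap.lTensor_tmul, hdc, hdde, TensorProduct.tmul_zero]
        abel
      · change pD (h + (1 - X : K[X]) ⊗ₜ m - 1 ⊗ₜ c - X ⊗ₜ S.d e) -
          S.d.lTensor K[X] ((- 1 : K[X]) ⊗ₜ e) = f1
        simp only [map_add, map_sub, e3, pD_tmul, LinearMap.lTensor_tmul, derivative_one,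
          derivative_X, TensorProduct.sub_tmul, TensorProduct.zero_tmul, TensorProduct.neg_tmul, map_neg]
        abel
  · intro i x hx; exact hπg i _ hx.2.2
  · intro i x hx
    have := hπd i _ hx.2.2
    change π (ev 1 (S.d.lTensor K[X] x.1)) = _
    rw [ev_d]; exact this
  · intro i j x hx y hy
    have := hπb i j _ hx.2.2 _ hy.2.2
    change π (ev 1 (brT S.br x.1 y.1)) = _
    rw [ev_br]; exact this
  · intro i a hag had
    obtain ⟨x, hx, hdx, rfl⟩ := hc i a hag had
    obtain ⟨c, hc, e, he, rfl⟩ := ha i x (hN _ hx) hdx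
    have hdde := S.d_sq _ e he
    have hdc : S.d c = 0 := by rwa [map_add, hdde, add_zero] at hdx
    have hde := S.d_deg _ e he
    rw [sub_add_cancel] at hde
    have hev : ev 1 ((1 : K[X]) ⊗ₜ c + X ⊗ₜ[K] S.d e) = c + S.d e := by simp
    refine ⟨(1 ⊗ₜ c + X ⊗ₜ S.d e, 1 ⊗ₜ e), ⟨⟨?_, ?_⟩, ?_, ?_⟩, ?_, ?_⟩
    · exact add_mem (tmul_mem_GT _ (hM _ hc)) (tmul_mem_GT _ hde)
    · exact tmul_mem_GT _ he
    · change ev 0 ((1 : K[X]) ⊗ₜ c + X ⊗ₜ[K] S.d e) ∈ M i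
      simpa using hc
    · change ev 1 ((1 : K[X]) ⊗ₜ c + X ⊗ₜ[K] S.d e) ∈ N i
      rw [hev]; exact hx
    · refine Prod.ext ?_ ?_
      · change S.d.lTensor K[X] ((1 : K[X]) ⊗ₜ c + X ⊗ₜ[K] S.d e) = 0
        simp [hdc, hdde]
      · change pD ((1 : K[X]) ⊗ₜ c + X ⊗ₜ[K] S.d e) - S.d.lTensor K[X] (1 ⊗ₜ e) = 0
        simp
    · exact congrArg π hev

end evs
end BVProof

set_option linter.all false
set_option linter.unusedSimpArgs false
namespace BVProof

/-- Graded Lie algebra with two anticommuting differentials, of degrees `1` and `-k`. -/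
structure PreBi (K : Type u) [Field K] (k : ℤ) (W : Type v) [AddCommGroup W] [Module K W] where
  G : ℤ → Submodule K W
  indep : iSupIndep G
  d0 : W →ₗ[K] W
  d1 : W →ₗ[K] W
  br : W →ₗ[K] W →ₗ[K] W
  τ : W →ₗ[K] W
  tau_eq : ∀ i, ∀ x ∈ G i, τ x = ((-1 : K) ^ i) • x
  d0_deg : ∀ i, ∀ x ∈ G i, d0 x ∈ G (i + 1)
  d1_deg : ∀ i, ∀ x ∈ G i, d1 x ∈ G (i - k)
  d0_sq : ∀ i, ∀ x ∈ G i, d0 (d0 x) = 0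
  d1_sq : ∀ i, ∀ x ∈ G i, d1 (d1 x) = 0
  d01 : ∀ i, ∀ x ∈ G i, d0 (d1 x) + d1 (d0 x) = 0
  br_deg : ∀ i j, ∀ x ∈ G i, ∀ y ∈ G j, br x y ∈ G (i + j)
  skew : ∀ i j, ∀ x ∈ G i, ∀ y ∈ G j, br x y = -(((-1 : K) ^ (i * j)) • br y x)
  jac : ∀ i j l, ∀ x ∈ G i, ∀ y ∈ G j, ∀ z ∈ G l,
    br x (br y z) = br (br x y) z + ((-1 : K) ^ (i * j)) • br y (br x z)
  leib0 : ∀ i j, ∀ x ∈ G i, ∀ y ∈ G j,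
    d0 (br x y) = br (d0 x) y + ((-1 : K) ^ i) • br x (d0 y)
  leib1 : ∀ i j, ∀ x ∈ G i, ∀ y ∈ G j,
    d1 (br x y) = br (d1 x) y + ((-1 : K) ^ i) • br x (d1 y)

section conv
variable {K : Type u} [Field K] {V : Type v} [AddCommGroup V] [Module K V]

/-- bounded below -/
def Bdd (f : ℤ → V) (N : ℤ) : Prop := ∀ p, p < N → f p = 0

lemma Bdd.mono {f : ℤ → V} {N M : ℤ} (h : Bdd f N) (hM : M ≤ N) : Bdd f M :=
  fun p hp => h p (lt_of_lt_of_le hp hM)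

/-- convolution -/
noncomputable def conv (b : V →ₗ[K] V →ₗ[K] V) (f g : ℤ → V) (q : ℤ) : V :=
  ∑ᶠ i, b (f i) (g (q - i))

lemma conv_eq (b : V →ₗ[K] V →ₗ[K] V) {f g : ℤ → V} {N M : ℤ} (hf : Bdd f N) (hg : Bdd g M)
    (q : ℤ) (s : Finset ℤ) (hs : Finset.Icc N (q - M) ⊆ s) :
    conv b f g q = ∑ i ∈ s, b (f i) (g (q - i)) := by
  refine finsum_eq_sum_of_support_subset _ fun i hi => hs ?_
  rw [Finset.mem_Icc]
  by_contra hc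
  apply hi
  by_cases h : i < N
  · simp [hf i h]
  · simp [hg (q - i) (by omega)]

lemma conv_bdd (b : V →ₗ[K] V →ₗ[K] V) {f g : ℤ → V} {N M : ℤ} (hf : Bdd f N) (hg : Bdd g M) :
    Bdd (conv b f g) (N + M) := by
  intro p hp
  rw [conv_eq b hf hg p _ (subset_refl _), Finset.Icc_eq_empty (by omega), Finset.sum_empty]

lemma conv_lin (b b' b'' : V →ₗ[K] V →ₗ[K] V) {f g f' g' f'' g'' : ℤ → V} {N : ℤ}
    (hf : Bdd f N) (hg : Bdd g N) (hf' : Bdd f' N) (hg' : Bdd g' N) (hf'' : Bdd f'' N)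
    (hg'' : Bdd g'' N) (c : K)
    (h : ∀ i j, b (f i) (g j) = b' (f' i) (g' j) + c • b'' (f'' i) (g'' j)) (q : ℤ) :
    conv b f g q = conv b' f' g' q + c • conv b'' f'' g'' q := by
  rw [conv_eq b hf hg q _ (subset_refl _), conv_eq b' hf' hg' q _ (subset_refl _),
    conv_eq b'' hf'' hg'' q _ (subset_refl _), Finset.smul_sum, ← Finset.sum_add_distrib]
  exact Finset.sum_congr rfl fun i _ => h _ _

lemma conv_map (b : V →ₗ[K] V →ₗ[K] V) (φ : V →ₗ[K] V) {f g : ℤ → V} {N M : ℤ}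
    (hf : Bdd f N) (hg : Bdd g M) (q : ℤ) :
    φ (conv b f g q) = conv (b.compr₂ φ) f g q := by
  rw [conv_eq b hf hg q _ (subset_refl _), conv_eq _ hf hg q _ (subset_refl _), map_sum]
  rfl

lemma conv_flip (b : V →ₗ[K] V →ₗ[K] V) (f g : ℤ → V) (q : ℤ) :
    conv b.flip f g q = conv b g f q := by
  unfold conv
  rw [← finsum_comp_equiv (Equiv.subLeft q)]
  simp

lemma conv_shift_left (b : V →ₗ[K] V →ₗ[K] V) (f g : ℤ → V) (q : ℤ) :
    conv b (fun i => f (i - 1)) g q = conv b f g (q - 1) := by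
  unfold conv
  rw [← finsum_comp_equiv (Equiv.addRight (1 : ℤ))]
  refine finsum_congr fun i => ?_
  simp only [Equiv.coe_addRight, add_sub_cancel_right]
  congr 2; ring

lemma conv_shift_right (b : V →ₗ[K] V →ₗ[K] V) (f g : ℤ → V) (q : ℤ) :
    conv b f (fun i => g (i - 1)) q = conv b f g (q - 1) := by
  unfold conv
  refine finsum_congr fun i => ?_
  congr 2; ring

lemma conv_right (b : V →ₗ[K] V →ₗ[K] V) {x y z : ℤ → V} {N : ℤ} (hx : Bdd x N) (hy : Bdd y N)
    (hz : Bdd z N) (q : ℤ) :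
    conv b x (conv b y z) q = ∑ i ∈ Finset.Icc N (q - 2 * N), ∑ j ∈ Finset.Icc N (q - 2 * N),
      b (x i) (b (y j) (z (q - i - j))) := by
  rw [conv_eq b hx (conv_bdd b hy hz) q (Finset.Icc N (q - 2 * N)) (by rw [two_mul])]
  refine Finset.sum_congr rfl fun i hi => ?_
  rw [Finset.mem_Icc] at hi
  rw [conv_eq b hy hz (q - i) (Finset.Icc N (q - 2 * N))
    (Finset.Icc_subset_Icc_right (by omega)), map_sum]

lemma conv_left (b : V →ₗ[K] V →ₗ[K] V) {x y z : ℤ → V} {N : ℤ} (hx : Bdd x N) (hy : Bdd y N)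
    (hz : Bdd z N) (q : ℤ) :
    conv b (conv b x y) z q = ∑ i ∈ Finset.Icc N (q - 2 * N), ∑ j ∈ Finset.Icc N (q - 2 * N),
      b (b (x i) (y j)) (z (q - i - j)) := by
  rw [conv_eq b (conv_bdd b hx hy) hz q (Finset.Icc (N + N) (q - N)) (subset_refl _)]
  have : ∀ l ∈ Finset.Icc (N + N) (q - N), b (conv b x y l) (z (q - l)) =
      ∑ i ∈ Finset.Icc N (q - 2 * N), b (b (x i) (y (l - i))) (z (q - l)) := by
    intro l hl
    rw [Finset.mem_Icc] at hl
    rw [conv_eq b hx hy l (Finset.Icc N (q - 2 * N)) (Finset.Icc_subset_Icc_right (by omega)),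
      map_sum, LinearMap.sum_apply]
  rw [Finset.sum_congr rfl this, Finset.sum_comm]
  refine Finset.sum_congr rfl fun i hi => ?_
  rw [Finset.mem_Icc] at hi
  rw [← finsum_eq_sum_of_support_subset, ← finsum_eq_sum_of_support_subset,
    ← finsum_comp_equiv (Equiv.addRight i)]
  · refine finsum_congr fun j => ?_
    simp only [Equiv.coe_addRight, add_sub_cancel_right]
    congr 2; ring
  · intro j hj
    rw [Finset.mem_coe, Finset.mem_Icc]
    by_contra hc
    apply hj
    by_cases h : j < N
    · simp [hy j h]
    · simp [hz (q - i - j) (by omega)]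
  · intro l hl
    rw [Finset.mem_coe, Finset.mem_Icc]
    by_contra hc
    apply hl
    by_cases h : l - i < N
    · simp [hy _ h]
    · simp [hz (q - l) (by omega)]

variable (K V) in
/-- Laurent series with coefficients in a module. -/
def lau : Submodule K (ℤ → V) where
  carrier := {f | ∃ N : ℤ, Bdd f N}
  zero_mem' := ⟨0, fun _ _ => rfl⟩
  add_mem' := by
    rintro f g ⟨N, hN⟩ ⟨N', hN'⟩
    refine ⟨min N N', fun p hp => ?_⟩
    have h1 : f p = 0 := hN p (lt_of_lt_of_le hp (min_le_left _ _))
    have h2 : g p = 0 := hN' p (lt_of_lt_of_le hp (min_le_right _ _))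
    show f p + g p = 0
    rw [h1, h2, add_zero]
  smul_mem' := by
    rintro c f ⟨N, hN⟩
    refine ⟨N, fun p hp => ?_⟩
    show c • f p = 0
    rw [hN p hp, smul_zero]

lemma bdd2 (f g : lau K V) : ∃ N, Bdd (f : ℤ → V) N ∧ Bdd (g : ℤ → V) N := by
  obtain ⟨N, hN⟩ := f.2
  obtain ⟨M, hM⟩ := g.2
  exact ⟨min N M, hN.mono (min_le_left _ _), hM.mono (min_le_right _ _)⟩

lemma bdd3 (f g h : lau K V) :
    ∃ N, Bdd (f : ℤ → V) N ∧ Bdd (g : ℤ → V) N ∧ Bdd (h : ℤ → V) N := by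
  obtain ⟨N, hN, hN'⟩ := bdd2 f g
  obtain ⟨M, hM⟩ := h.2
  exact ⟨min N M, hN.mono (min_le_left _ _), hN'.mono (min_le_left _ _), hM.mono (min_le_right _ _)⟩

lemma bdd_add {f g : ℤ → V} {N : ℤ} (hf : Bdd f N) (hg : Bdd g N) :
    Bdd (fun i => f i + g i) N := fun p hp => by simp [hf p hp, hg p hp]

lemma bdd_smul {f : ℤ → V} {N : ℤ} (c : K) (hf : Bdd f N) :
    Bdd (fun i => c • f i) N := fun p hp => by simp [hf p hp]

lemma bdd_map {f : ℤ → V} {N : ℤ} (φ : V →ₗ[K] V) (hf : Bdd f N) :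
    Bdd (fun i => φ (f i)) N := fun p hp => by simp [hf p hp]

lemma bdd_shift {f : ℤ → V} {N : ℤ} (hf : Bdd f N) :
    Bdd (fun i => f (i - 1)) N := fun p hp => hf _ (by omega)

lemma bdd_zero (N : ℤ) : Bdd (fun _ => (0 : V)) N := fun p hp => rfl

/-- bracket of Laurent series -/
noncomputable def brL (b : V →ₗ[K] V →ₗ[K] V) : lau K V →ₗ[K] lau K V →ₗ[K] lau K V :=
  LinearMap.mk₂ K (fun f g => ⟨conv b f g, by
      obtain ⟨N, hf, hg⟩ := bdd2 f g
      exact ⟨_, conv_bdd b hf hg⟩⟩)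
    (fun f f' g => by
      obtain ⟨N, hf, hf', hg⟩ := bdd3 f f' g
      ext q
      have := conv_lin b b b (bdd_add hf hf') hg hf hg hf' hg 1 (by simp) q
      simpa using! this)
    (fun c f g => by
      obtain ⟨N, hf, hg⟩ := bdd2 f g
      ext q
      have := conv_lin b 0 b (bdd_smul c hf) hg hf hg hf hg c (by simp) q
      simpa [conv] using! this)
    (fun f g g' => by
      obtain ⟨N, hf, hg, hg'⟩ := bdd3 f g g'
      ext q
      have := conv_lin b b b hf (bdd_add hg hg') hf hg hf hg' 1 (by simp) q
      simpa using! this)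
    (fun c f g => by
      obtain ⟨N, hf, hg⟩ := bdd2 f g
      ext q
      have := conv_lin b 0 b hf (bdd_smul c hg) hf hg hf hg c (by simp) q
      simpa [conv] using! this)

/-- coefficientwise map -/
def mapL (φ : V →ₗ[K] V) : lau K V →ₗ[K] lau K V where
  toFun f := ⟨fun i => φ (f.1 i), by
    obtain ⟨N, hf⟩ := f.2
    exact ⟨N, bdd_map φ hf⟩⟩
  map_add' f g := by ext; simp
  map_smul' c f := by ext; simp

/-- shift (multiplication by `t`) -/
def shL : lau K V →ₗ[K] lau K V where
  toFun f := ⟨fun i => f.1 (i - 1), by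
    obtain ⟨N, hf⟩ := f.2
    exact ⟨N, bdd_shift hf⟩⟩
  map_add' f g := by ext; simp
  map_smul' c f := by ext; simp

/-- homogeneous Laurent series -/
def GLau (k : ℤ) (G : ℤ → Submodule K V) (n : ℤ) : Submodule K (lau K V) where
  carrier := {f | ∀ p, f.1 p ∈ G (n - p * (k + 1))}
  zero_mem' := fun p => zero_mem _
  add_mem' := fun hf hg p => add_mem (hf p) (hg p)
  smul_mem' := fun c f hf p => Submodule.smul_mem _ c (hf p)

lemma sgn_sh {k : ℤ} (hk : Odd k) (n p : ℤ) : (-1 : K) ^ (n - p * (k + 1)) = (-1 : K) ^ n := by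
  have : ¬ Even k := Int.not_even_iff_odd.mpr hk
  simp only [sgn, Int.even_sub, Int.even_mul, Int.even_add, this, Int.not_even_one]
  simp

lemma sgn_sh2 {k : ℤ} (hk : Odd k) (n p m q : ℤ) :
    (-1 : K) ^ ((n - p * (k + 1)) * (m - q * (k + 1))) = (-1 : K) ^ (n * m) := by
  have : ¬ Even k := Int.not_even_iff_odd.mpr hk
  simp only [sgn, Int.even_sub, Int.even_mul, Int.even_add, this, Int.not_even_one]
  simp

/-- Laurent extension -/
noncomputable def lauDGLA {k : ℤ} (hk : Odd k) (S : PreBi K k V) : PreDGLA K (lau K V) where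
  G := GLau k S.G
  indep := by
    refine indep_of_maps (Q := ℤ) (V := fun _ => V) _
      (fun p => LinearMap.proj p ∘ₗ (lau K V).subtype)
      (fun p => S.G ∘ fun n => n - p * (k + 1)) (fun p => S.indep.comp sub_left_injective) ?_ ?_
    · intro p i x hx
      exact hx p
    · intro i x _ h
      ext p
      exact h p
  d := mapL S.d0 + shL ∘ₗ mapL S.d1
  br := brL S.br
  τ := mapL S.τ
  tau_eq n f hf := by
    ext p
    have := S.tau_eq _ _ (hf p)
    rw [sgn_sh hk] at this
    exact this
  d_deg n f hf p := by
    have h0 := S.d0_deg _ _ (hf p)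
    have h1 := S.d1_deg _ _ (hf (p - 1))
    rw [show n - (p - 1) * (k + 1) - k = n + 1 - p * (k + 1) by ring] at h1
    rw [show n - p * (k + 1) + 1 = n + 1 - p * (k + 1) by ring] at h0
    exact add_mem h0 h1
  d_sq n f hf := by
    ext p
    have h0 := S.d0_sq _ _ (hf p)
    have h1 := S.d1_sq _ _ (hf (p - 1 - 1))
    have h2 := S.d01 _ _ (hf (p - 1))
    change S.d0 (S.d0 (f.1 p) + S.d1 (f.1 (p - 1))) +
      S.d1 (S.d0 (f.1 (p - 1)) + S.d1 (f.1 (p - 1 - 1))) = 0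
    rw [map_add, map_add, h0, h1, zero_add, add_zero, h2]
  br_deg n m f hf g hg p := by
    obtain ⟨N, hN, hM⟩ := bdd2 f g
    change conv S.br f g p ∈ _
    rw [conv_eq S.br hN hM p _ (subset_refl _)]
    refine Submodule.sum_mem _ fun i _ => ?_
    have := S.br_deg _ _ _ (hf i) _ (hg (p - i))
    rwa [show n - i * (k + 1) + (m - (p - i) * (k + 1)) = n + m - p * (k + 1) by ring] at this
  skew n m f hf g hg := by
    obtain ⟨N, hN, hM⟩ := bdd2 f g
    ext q
    have := conv_lin S.br 0 S.br.flip hN hM hN hM hN hM (-((-1 : K) ^ (n * m))) (fun i j => by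
      have := S.skew _ _ _ (hf i) _ (hg j)
      rw [sgn_sh2 hk] at this
      simpa using this) q
    rw [conv_flip] at this
    simpa [conv] using! this
  jac n m l f hf g hg h hh := by
    obtain ⟨N, hN, hM, hP⟩ := bdd3 f g h
    ext q
    change conv S.br f (conv S.br g h) q = conv S.br (conv S.br f g) h q +
      ((-1 : K) ^ (n * m)) • conv S.br g (conv S.br f h) q
    rw [conv_right S.br hN hM hP, conv_right S.br hM hN hP, conv_left S.br hN hM hP,
      Finset.sum_comm (f := fun i j => S.br (g.1 i) (S.br (f.1 j) (h.1 (q - i - j)))),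
      Finset.smul_sum, ← Finset.sum_add_distrib]
    refine Finset.sum_congr rfl fun i _ => ?_
    rw [Finset.smul_sum, ← Finset.sum_add_distrib]
    refine Finset.sum_congr rfl fun j _ => ?_
    have := S.jac _ _ _ _ (hf i) _ (hg j) _ (hh (q - i - j))
    rw [sgn_sh2 hk] at this
    rw [this, show q - j - i = q - i - j by ring]
  leib n m f hf g hg := by
    obtain ⟨N, hN, hM⟩ := bdd2 f g
    ext q
    change S.d0 (conv S.br f g q) + S.d1 (conv S.br f g (q - 1)) =
      conv S.br (fun i => S.d0 (f.1 i) + S.d1 (f.1 (i - 1))) g q + ((-1 : K) ^ n) •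
      conv S.br f (fun i => S.d0 (g.1 i) + S.d1 (g.1 (i - 1))) q
    have a0 := conv_lin (S.br.compr₂ S.d0) S.br S.br hN hM (bdd_map S.d0 hN) hM
      hN (bdd_map S.d0 hM) ((-1 : K) ^ n) (fun i j => by
        have := S.leib0 _ _ _ (hf i) _ (hg j)
        rw [sgn_sh hk] at this
        exact this) q
    have a1 := conv_lin (S.br.compr₂ S.d1) S.br S.br hN hM (bdd_map S.d1 hN) hM
      hN (bdd_map S.d1 hM) ((-1 : K) ^ n) (fun i j => by
        have := S.leib1 _ _ _ (hf i) _ (hg j)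
        rw [sgn_sh hk] at this
        exact this) (q - 1)
    rw [conv_map S.br S.d0 hN hM, conv_map S.br S.d1 hN hM, a0, a1,
      conv_lin S.br S.br S.br (bdd_add (bdd_map S.d0 hN) (bdd_shift (bdd_map S.d1 hN))) hM
        (bdd_map S.d0 hN) hM (bdd_shift (bdd_map S.d1 hN)) hM 1 (by simp) q,
      conv_lin S.br S.br S.br hN (bdd_add (bdd_map S.d0 hM) (bdd_shift (bdd_map S.d1 hM)))
        hN (bdd_map S.d0 hM) hN (bdd_shift (bdd_map S.d1 hM)) 1 (by simp) q,
      conv_shift_left S.br (fun i => S.d1 (f.1 i)), conv_shift_right S.br _ (fun i => S.d1 (g.1 i))]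
    module

end conv
end BVProof

set_option linter.all false
set_option linter.unusedSimpArgs false
namespace BVProof

/-- Identities in a BV algebra, restricted to homogeneous submodules. -/
structure BVF (K : Type u) [Field K] (k : ℤ) (A : Type v) [Ring A] [Algebra K A] where
  F : ℤ → Submodule K A
  indep : iSupIndep F
  br : A →ₗ[K] A →ₗ[K] A
  d : A →ₗ[K] A
  Δ : A →ₗ[K] A
  τ : A →ₗ[K] A
  tau_eq : ∀ i, ∀ a ∈ F i, τ a = ((-1 : K) ^ i) • a
  mul_mem : ∀ i j, ∀ a ∈ F i, ∀ b ∈ F j, a * b ∈ F (i + j)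
  d_deg : ∀ i, ∀ a ∈ F i, d a ∈ F (i + 1)
  D_deg : ∀ i, ∀ a ∈ F i, Δ a ∈ F (i - k)
  br_deg : ∀ i j, ∀ a ∈ F i, ∀ b ∈ F j, br a b ∈ F (i + j - k)
  gcomm : ∀ i j, ∀ a ∈ F i, ∀ b ∈ F j, a * b = ((-1 : K) ^ (i * j)) • (b * a)
  d_sq : ∀ i, ∀ a ∈ F i, d (d a) = 0
  D_sq : ∀ i, ∀ a ∈ F i, Δ (Δ a) = 0
  dD : ∀ i, ∀ a ∈ F i, d (Δ a) = - Δ (d a)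
  d_mul : ∀ i j, ∀ a ∈ F i, ∀ b ∈ F j, d (a * b) = d a * b + ((-1 : K) ^ i) • (a * d b)
  skew : ∀ i j, ∀ a ∈ F i, ∀ b ∈ F j, br a b = -(((-1 : K) ^ ((i - k) * (j - k))) • br b a)
  jac : ∀ i j l, ∀ a ∈ F i, ∀ b ∈ F j, ∀ c ∈ F l,
    br a (br b c) = br (br a b) c + ((-1 : K) ^ ((i - k) * (j - k))) • br b (br a c)
  d_br : ∀ i j, ∀ a ∈ F i, ∀ b ∈ F j,
    d (br a b) = br (d a) b + ((-1 : K) ^ (i - k)) • br a (d b)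
  D_br : ∀ i j, ∀ a ∈ F i, ∀ b ∈ F j,
    Δ (br a b) = br (Δ a) b + ((-1 : K) ^ (i - k)) • br a (Δ b)
  poisson : ∀ i j l, ∀ a ∈ F i, ∀ b ∈ F j, ∀ c ∈ F l,
    br a (b * c) = br a b * c + ((-1 : K) ^ ((i - k) * j)) • (b * br a c)
  D_mul : ∀ i j, ∀ a ∈ F i, ∀ b ∈ F j,
    Δ (a * b) = Δ a * b + ((-1 : K) ^ i) • (a * Δ b) + ((-1 : K) ^ i) • br a b

/-- semidirect products -/
lemma semi {K : Type u} [Field K] {V : Type v} [AddCommGroup V] [Module K V]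
    {M : Type v} [AddCommGroup M] [Module K M]
    (G : ℤ → Submodule K V) (GM : ℤ → Submodule K M)
    (br : V →ₗ[K] V →ₗ[K] V) (ρ : V →ₗ[K] M →ₗ[K] M)
    (br_deg : ∀ i j, ∀ x ∈ G i, ∀ y ∈ G j, br x y ∈ G (i + j))
    (ρ_deg : ∀ i j, ∀ x ∈ G i, ∀ y ∈ GM j, ρ x y ∈ GM (i + j))
    (skew : ∀ i j, ∀ x ∈ G i, ∀ y ∈ G j, br x y = -(((-1 : K) ^ (i * j)) • br y x))
    (jac : ∀ i j l, ∀ x ∈ G i, ∀ y ∈ G j, ∀ z ∈ G l,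
      br x (br y z) = br (br x y) z + ((-1 : K) ^ (i * j)) • br y (br x z))
    (rep : ∀ i j l, ∀ x ∈ G i, ∀ y ∈ G j, ∀ z ∈ GM l,
      ρ x (ρ y z) = ρ (br x y) z + ((-1 : K) ^ (i * j)) • ρ y (ρ x z))
    (bE : (M × V) →ₗ[K] (M × V) →ₗ[K] (M × V))
    (hbE : ∀ i j, ∀ x ∈ (GM i).prod (G i), ∀ y ∈ (GM j).prod (G j),
      bE x y = (ρ x.2 y.1 - ((-1 : K) ^ (i * j)) • ρ y.2 x.1, br x.2 y.2)) :
    (∀ i j, ∀ x ∈ (GM i).prod (G i), ∀ y ∈ (GM j).prod (G j), bE x y ∈ (GM (i + j)).prod (G (i + j))) ∧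
    (∀ i j, ∀ x ∈ (GM i).prod (G i), ∀ y ∈ (GM j).prod (G j),
      bE x y = -(((-1 : K) ^ (i * j)) • bE y x)) ∧
    (∀ i j l, ∀ x ∈ (GM i).prod (G i), ∀ y ∈ (GM j).prod (G j), ∀ z ∈ (GM l).prod (G l),
      bE x (bE y z) = bE (bE x y) z + ((-1 : K) ^ (i * j)) • bE y (bE x z)) := by
  have deg : ∀ i j, ∀ x ∈ (GM i).prod (G i), ∀ y ∈ (GM j).prod (G j),
      bE x y ∈ (GM (i + j)).prod (G (i + j)) := by
    intro i j x hx y hy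
    rw [hbE i j x hx y hy]
    refine ⟨sub_mem (ρ_deg _ _ _ hx.2 _ hy.1) (Submodule.smul_mem _ _ ?_), br_deg _ _ _ hx.2 _ hy.2⟩
    have := ρ_deg _ _ _ hy.2 _ hx.1
    rwa [add_comm] at this
  refine ⟨deg, ?_, ?_⟩
  · intro i j x hx y hy
    rw [hbE i j x hx y hy, hbE j i y hy x hx]
    ext
    · by_cases hi : Even i <;> by_cases hj : Even j <;>
      simp only [sgn, hi, hj, Int.even_mul, or_true, or_false, true_or, false_or, if_true, if_false,
        Prod.smul_fst, Prod.fst_neg] <;> module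
    · exact skew i j _ hx.2 _ hy.2
  · intro i j l x hx y hy z hz
    rw [hbE i (j + l) x hx _ (deg j l y hy z hz), hbE j (i + l) y hy _ (deg i l x hx z hz),
      hbE (i + j) l _ (deg i j x hx y hy) z hz, hbE j l y hy z hz, hbE i l x hx z hz,
      hbE i j x hx y hy]
    ext
    · simp only [Prod.fst_add, Prod.smul_fst, map_sub, map_smul,
        rep _ _ _ _ hx.2 _ hy.2 _ hz.1, rep _ _ _ _ hx.2 _ hz.2 _ hy.1,
        rep _ _ _ _ hy.2 _ hz.2 _ hx.1]
      by_cases hi : Even i <;> by_cases hj : Even j <;> by_cases hl : Even l <;>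
      simp only [sgn, hi, hj, hl, Int.even_mul, Int.even_add, or_true, or_false, true_or, false_or,
        if_true, if_false, iff_true, iff_false, not_true_eq_false, not_false_eq_true] <;> module
    · exact jac _ _ _ _ hx.2 _ hy.2 _ hz.2

section E0
variable {K : Type u} [Field K] {k : ℤ} {A : Type v} [Ring A] [Algebra K A]

/-- bracket on pairs (b, α) -/
def bE1 (S : BVF K k A) : (A × A) →ₗ[K] (A × A) →ₗ[K] (A × A) :=
  LinearMap.mk₂ K (fun x y => (S.br x.2 y.1 - S.br x.1 (S.τ y.2), S.br x.2 y.2))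
    (by intros; ext <;> simp; abel) (by intros; ext <;> simp [smul_sub])
    (by intros; ext <;> simp; abel) (by intros; ext <;> simp [smul_sub])

/-- action on m -/
def rho2 (S : BVF K k A) : (A × A) →ₗ[K] A →ₗ[K] A :=
  LinearMap.mk₂ K (fun x m => S.br x.2 m + x.1 * m)
    (by intros; simp [add_mul]; abel) (by intros; simp)
    (by intros; simp [mul_add]; abel) (by intros; simp)

/-- bracket on triples (m, (b, α)) -/
def bE2 (S : BVF K k A) : (A × A × A) →ₗ[K] (A × A × A) →ₗ[K] (A × A × A) :=
  LinearMap.mk₂ K (fun x y => (rho2 S x.2 y.1 + S.br x.1 y.2.2 - x.1 * S.τ y.2.1, bE1 S x.2 y.2))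
    (by intros; ext <;> simp [add_mul]; abel) (by intros; ext <;> simp [smul_sub])
    (by intros; ext <;> simp [mul_add]; abel) (by intros; ext <;> simp [smul_sub])

/-- grading on pairs -/
def G1 (S : BVF K k A) (n : ℤ) : Submodule K (A × A) := (S.F n).prod (S.F (n + k))
/-- grading on triples -/
def G2 (S : BVF K k A) (n : ℤ) : Submodule K (A × A × A) := (S.F (n - 1)).prod (G1 S n)

lemma bE1_eq (hk : Odd k) (S : BVF K k A) : ∀ i j, ∀ x ∈ (S.F i).prod (S.F (i + k)),
    ∀ y ∈ (S.F j).prod (S.F (j + k)),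
    bE1 S x y = (S.br x.2 y.1 - ((-1 : K) ^ (i * j)) • S.br y.2 x.1, S.br x.2 y.2) := by
  intro i j x hx y hy
  have hk' := Int.not_even_iff_odd.mpr hk
  ext
  · simp only [bE1, LinearMap.mk₂_apply, S.tau_eq _ _ hy.2, map_smul,
      S.skew _ _ _ hx.1 _ hy.2]
    by_cases hi : Even i <;> by_cases hj : Even j <;>
    simp only [sgn, hi, hj, hk', Int.even_mul, Int.even_add, Int.even_sub, or_true, or_false,
      true_or, false_or,
        if_true, if_false, iff_true, iff_false, not_true_eq_false, not_false_eq_true] <;> module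
  · rfl

lemma bE2_eq (hk : Odd k) (S : BVF K k A) : ∀ i j, ∀ x ∈ (S.F (i - 1)).prod (G1 S i),
    ∀ y ∈ (S.F (j - 1)).prod (G1 S j),
    bE2 S x y = (rho2 S x.2 y.1 - ((-1 : K) ^ (i * j)) • rho2 S y.2 x.1, bE1 S x.2 y.2) := by
  intro i j x hx y hy
  have hk' := Int.not_even_iff_odd.mpr hk
  ext
  · simp only [bE2, rho2, LinearMap.mk₂_apply, S.tau_eq _ _ hy.2.1, mul_smul_comm,
      S.skew _ _ _ hx.1 _ hy.2.2, S.gcomm _ _ _ hx.1 _ hy.2.1]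
    by_cases hi : Even i <;> by_cases hj : Even j <;>
    simp only [sgn, hi, hj, hk', Int.even_mul, Int.even_add, Int.even_sub, or_true, or_false,
      true_or, false_or, Int.not_even_one,
        if_true, if_false, iff_true, iff_false, not_true_eq_false, not_false_eq_true] <;> module
  · rfl
  · rfl

lemma add_deg (S : BVF K k A) {i j l : ℤ} (h : i + j - k = l) {a b : A} (ha : a ∈ S.F i)
    (hb : b ∈ S.F j) : S.br a b ∈ S.F l := h ▸ S.br_deg i j a ha b hb

lemma mul_deg (S : BVF K k A) {i j l : ℤ} (h : i + j = l) {a b : A} (ha : a ∈ S.F i)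
    (hb : b ∈ S.F j) : a * b ∈ S.F l := h ▸ S.mul_mem i j a ha b hb

lemma semi1 (hk : Odd k) (S : BVF K k A) :
    (∀ i j, ∀ x ∈ G1 S i, ∀ y ∈ G1 S j, bE1 S x y ∈ G1 S (i + j)) ∧
    (∀ i j, ∀ x ∈ G1 S i, ∀ y ∈ G1 S j, bE1 S x y = -(((-1 : K) ^ (i * j)) • bE1 S y x)) ∧
    (∀ i j l, ∀ x ∈ G1 S i, ∀ y ∈ G1 S j, ∀ z ∈ G1 S l,
      bE1 S x (bE1 S y z) = bE1 S (bE1 S x y) z + ((-1 : K) ^ (i * j)) • bE1 S y (bE1 S x z)) := semi (fun n => S.F (n + k)) S.F S.br S.br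
  (fun i j x hx y hy => add_deg S (by ring) hx hy)
  (fun i j x hx y hy => add_deg S (by ring) hx hy)
  (fun i j x hx y hy => by simpa using S.skew _ _ x hx y hy)
  (fun i j l x hx y hy z hz => by simpa using S.jac _ _ _ x hx y hy z hz)
  (fun i j l x hx y hy z hz => by simpa using S.jac _ _ _ x hx y hy z hz)
  (bE1 S) (bE1_eq hk S)

lemma semi2 (hk : Odd k) (S : BVF K k A) :
    (∀ i j, ∀ x ∈ G2 S i, ∀ y ∈ G2 S j, bE2 S x y ∈ G2 S (i + j)) ∧
    (∀ i j, ∀ x ∈ G2 S i, ∀ y ∈ G2 S j, bE2 S x y = -(((-1 : K) ^ (i * j)) • bE2 S y x)) ∧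
    (∀ i j l, ∀ x ∈ G2 S i, ∀ y ∈ G2 S j, ∀ z ∈ G2 S l,
      bE2 S x (bE2 S y z) = bE2 S (bE2 S x y) z + ((-1 : K) ^ (i * j)) • bE2 S y (bE2 S x z)) := semi (G1 S) (fun n => S.F (n - 1)) (bE1 S) (rho2 S)
  (semi1 hk S).1
  (fun i j x hx y hy => add_mem (add_deg S (by ring) hx.2 hy) (mul_deg S (by ring) hx.1 hy))
  (semi1 hk S).2.1 (semi1 hk S).2.2
  (fun i j l x hx y hy z hz => by
    have hk' := Int.not_even_iff_odd.mpr hk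
    rw [bE1_eq hk S i j x hx y hy]
    simp only [rho2, LinearMap.mk₂_apply, map_add, mul_add, sub_mul, smul_mul_assoc]
    have e1 := S.jac _ _ _ _ hx.2 _ hy.2 _ hz
    have e2 := S.poisson _ _ _ _ hx.2 _ hy.1 _ hz
    have e3 := S.poisson _ _ _ _ hy.2 _ hx.1 _ hz
    have e4 : x.1 * (y.1 * z) = ((-1 : K) ^ (i * j)) • (y.1 * (x.1 * z)) := by
      rw [← mul_assoc, S.gcomm _ _ _ hx.1 _ hy.1, smul_mul_assoc, mul_assoc]
    rw [e1, e2, e3, e4]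
    by_cases hi : Even i <;> by_cases hj : Even j <;>
    simp only [sgn, hi, hj, hk', Int.even_mul, Int.even_add, Int.even_sub, or_true, or_false,
      true_or, false_or,
        if_true, if_false, iff_true, iff_false, not_true_eq_false, not_false_eq_true] <;> module)
  (bE2 S) (bE2_eq hk S)

/-- first differential -/
def e0d (S : BVF K k A) : (A × A × A) →ₗ[K] (A × A × A) :=
    { toFun := fun x => (-S.d x.1 + S.τ x.2.1, -S.d x.2.1, -S.d x.2.2)
      map_add' := by intros; ext <;> simp <;> abel
      map_smul' := by intros; ext <;> simp }

/-- second differential -/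
def e1d (S : BVF K k A) : (A × A × A) →ₗ[K] (A × A × A) :=
    { toFun := fun x => (S.Δ x.1, S.Δ x.2.1, S.Δ x.2.2 + S.τ x.2.1)
      map_add' := by intros; ext <;> simp; abel
      map_smul' := by intros; ext <;> simp }

lemma e0d_apply (S : BVF K k A) (x : A × A × A) :
    e0d S x = (-S.d x.1 + S.τ x.2.1, -S.d x.2.1, -S.d x.2.2) := rfl
lemma e1d_apply (S : BVF K k A) (x : A × A × A) :
    e1d S x = (S.Δ x.1, S.Δ x.2.1, S.Δ x.2.2 + S.τ x.2.1) := rfl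

lemma e0d_deg (S : BVF K k A) : ∀ i, ∀ x ∈ G2 S i, e0d S x ∈ G2 S (i + 1) := by
    rintro n ⟨m, b, α⟩ ⟨hm, hb, hα⟩
    have h1 := S.d_deg _ _ hm
    have h2 := S.d_deg _ _ hα
    rw [sub_add_cancel] at h1
    refine ⟨?_, neg_mem (S.d_deg _ _ hb), ?_⟩
    · simp only [add_sub_cancel_right, e0d_apply]
      refine add_mem (neg_mem h1) ?_
      rw [S.tau_eq _ _ hb]
      exact Submodule.smul_mem _ _ hb
    · rw [show n + k + 1 = n + 1 + k by ring] at h2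
      exact neg_mem h2

lemma e1d_deg (S : BVF K k A) : ∀ i, ∀ x ∈ G2 S i, e1d S x ∈ G2 S (i - k) := by
    rintro n ⟨m, b, α⟩ ⟨hm, hb, hα⟩
    have h1 := S.D_deg _ _ hm
    have h2 := S.D_deg _ _ hα
    refine ⟨?_, S.D_deg _ _ hb, ?_⟩
    · rwa [show n - 1 - k = n - k - 1 by ring] at h1
    · simp only [sub_add_cancel, add_sub_cancel_right, e1d_apply] at h2 ⊢
      refine add_mem h2 ?_
      rw [S.tau_eq _ _ hb]
      exact Submodule.smul_mem _ _ hb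

lemma E_eq (hk : Odd k) (S : BVF K k A) (i j : ℤ) (x y : A × A × A) (hx : x ∈ G2 S i)
    (hy : y ∈ G2 S j) : bE2 S x y =
      (S.br x.2.2 y.1 + x.2.1 * y.1 - ((-1 : K) ^ (i * j)) • (S.br y.2.2 x.1 + y.2.1 * x.1),
        S.br x.2.2 y.2.1 - ((-1 : K) ^ (i * j)) • S.br y.2.2 x.2.1, S.br x.2.2 y.2.2) := by
  rw [bE2_eq hk S i j x hx y hy, bE1_eq hk S i j _ hx.2 _ hy.2]
  rfl

lemma e0_leib (hk : Odd k) (S : BVF K k A) (i j : ℤ) (x : A × A × A) (hx : x ∈ G2 S i)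
    (y : A × A × A) (hy : y ∈ G2 S j) :
    e0d S (bE2 S x y) = bE2 S (e0d S x) y + ((-1 : K) ^ i) • bE2 S x (e0d S y) := by
  have hk' := Int.not_even_iff_odd.mpr hk
  rw [E_eq hk S i j x y hx hy, E_eq hk S _ j _ y (e0d_deg S i x hx) hy,
    E_eq hk S i _ x _ hx (e0d_deg S j y hy)]
  obtain ⟨m, b, α⟩ := x
  obtain ⟨m', b', α'⟩ := y
  obtain ⟨hm, hb, hα⟩ := hx
  obtain ⟨hm', hb', hα'⟩ := hy
  simp only at hm hb hα hm' hb' hα'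
  have t1 := S.tau_eq _ _ (S.br_deg _ _ _ hα _ hb')
  have t2 := S.tau_eq _ _ (S.br_deg _ _ _ hα' _ hb)
  simp only [e0d_apply, Prod.smul_mk, Prod.mk_add_mk, map_add, map_sub, map_neg, map_smul,
    LinearMap.neg_apply, LinearMap.add_apply, mul_add, mul_neg, neg_mul, t1, t2,
    S.tau_eq _ _ hb, S.tau_eq _ _ hb', mul_smul_comm, LinearMap.smul_apply,
    S.d_br _ _ _ hα _ hm', S.d_br _ _ _ hα' _ hm, S.d_br _ _ _ hα _ hb', S.d_br _ _ _ hα' _ hb,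
    S.d_br _ _ _ hα _ hα', S.d_mul _ _ _ hb _ hm', S.d_mul _ _ _ hb' _ hm]
  rw [S.gcomm _ _ _ hb' _ hb]
  refine Prod.ext ?_ (Prod.ext ?_ ?_)
  all_goals
    simp only
    by_cases hi : Even i <;> by_cases hj : Even j <;> simp only [sgn, hi, hj, hk', Int.even_mul, Int.even_add, Int.even_sub, Int.not_even_one, or_true, or_false, true_or, false_or, if_true, if_false, iff_true, iff_false, true_iff, false_iff, not_true_eq_false, not_false_eq_true] <;> module

lemma e1_leib (hk : Odd k) (S : BVF K k A) (i j : ℤ) (x : A × A × A) (hx : x ∈ G2 S i)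
    (y : A × A × A) (hy : y ∈ G2 S j) :
    e1d S (bE2 S x y) = bE2 S (e1d S x) y + ((-1 : K) ^ i) • bE2 S x (e1d S y) := by
  have hk' := Int.not_even_iff_odd.mpr hk
  rw [E_eq hk S i j x y hx hy, E_eq hk S _ j _ y (e1d_deg S i x hx) hy,
    E_eq hk S i _ x _ hx (e1d_deg S j y hy)]
  obtain ⟨m, b, α⟩ := x
  obtain ⟨m', b', α'⟩ := y
  obtain ⟨hm, hb, hα⟩ := hx
  obtain ⟨hm', hb', hα'⟩ := hy
  simp only at hm hb hα hm' hb' hα'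
  have t1 := S.tau_eq _ _ (S.br_deg _ _ _ hα _ hb')
  have t2 := S.tau_eq _ _ (S.br_deg _ _ _ hα' _ hb)
  simp only [e1d_apply, Prod.smul_mk, Prod.mk_add_mk, map_add, map_sub, map_neg, map_smul,
    LinearMap.neg_apply, LinearMap.add_apply, mul_add, mul_neg, neg_mul, t1, t2,
    S.tau_eq _ _ hb, S.tau_eq _ _ hb', mul_smul_comm, LinearMap.smul_apply,
    S.D_br _ _ _ hα _ hm', S.D_br _ _ _ hα' _ hm, S.D_br _ _ _ hα _ hb', S.D_br _ _ _ hα' _ hb,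
    S.D_br _ _ _ hα _ hα', S.D_mul _ _ _ hb _ hm', S.D_mul _ _ _ hb' _ hm]
  refine Prod.ext ?_ (Prod.ext ?_ ?_)
  · simp only
    by_cases hi : Even i <;> by_cases hj : Even j <;> simp only [sgn, hi, hj, hk', Int.even_mul, Int.even_add, Int.even_sub, Int.not_even_one, or_true, or_false, true_or, false_or, if_true, if_false, iff_true, iff_false, true_iff, false_iff, not_true_eq_false, not_false_eq_true] <;> module
  · rw [S.skew _ _ _ hb' _ hb]
    by_cases hi : Even i <;> by_cases hj : Even j <;> simp only [sgn, hi, hj, hk', Int.even_mul, Int.even_add, Int.even_sub, Int.not_even_one, or_true, or_false, true_or, false_or, if_true, if_false, iff_true, iff_false, true_iff, false_iff, not_true_eq_false, not_false_eq_true] <;> module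
  · simp only
    rw [S.skew _ _ _ hb _ hα']
    by_cases hi : Even i <;> by_cases hj : Even j <;> simp only [sgn, hi, hj, hk', Int.even_mul, Int.even_add, Int.even_sub, Int.not_even_one, or_true, or_false, true_or, false_or, if_true, if_false, iff_true, iff_false, true_iff, false_iff, not_true_eq_false, not_false_eq_true] <;> module

/-- the bicomplex -/
def E0 (hk : Odd k) (S : BVF K k A) : PreBi K k (A × A × A) where
  G := G2 S
  indep := by
    refine indep_of_maps (Q := Fin 3) (V := fun _ => A) _
      (![LinearMap.fst K A (A × A), LinearMap.fst K A A ∘ₗ LinearMap.snd K A (A × A),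
        LinearMap.snd K A A ∘ₗ LinearMap.snd K A (A × A)])
      (![S.F ∘ fun n => n - 1, S.F, S.F ∘ fun n => n + k]) ?_ ?_ ?_
    · intro q
      fin_cases q
      · exact S.indep.comp (sub_left_injective)
      · exact S.indep
      · exact S.indep.comp (add_left_injective k)
    · intro q i x hx
      fin_cases q
      · exact hx.1
      · exact hx.2.1
      · exact hx.2.2
    · rintro i ⟨x, y, z⟩ hx h
      exact Prod.ext (h 0) (Prod.ext (h 1) (h 2))
  d0 := e0d S
  d1 := e1d S
  br := bE2 S
  τ := LinearMap.prodMap (-S.τ) (LinearMap.prodMap S.τ (-S.τ))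
  tau_eq := by
    rintro n ⟨m, b, α⟩ ⟨hm, hb, hα⟩
    have hk' := Int.not_even_iff_odd.mpr hk
    simp only [LinearMap.prodMap_apply, LinearMap.neg_apply, S.tau_eq _ _ hm, S.tau_eq _ _ hb,
      S.tau_eq _ _ hα]
    by_cases hi : Even n <;>
    simp only [sgn, hi, hk', Int.even_mul, Int.even_add, Int.even_sub, or_true, or_false,
      true_or, false_or, Int.not_even_one, iff_self,
        if_true, if_false, iff_true, iff_false, not_true_eq_false, not_false_eq_true] <;> simp
  d0_deg := e0d_deg S
  d1_deg := e1d_deg S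
  d0_sq := by
    rintro n ⟨m, b, α⟩ ⟨hm, hb, hα⟩
    have h1 := S.d_deg _ _ hb
    simp only [e0d_apply, e1d_apply, map_add, map_neg, S.d_sq _ _ hm, S.d_sq _ _ hb,
      S.d_sq _ _ hα, S.tau_eq _ _ hb, S.tau_eq _ _ h1, map_smul]
    by_cases hi : Even n <;>
    simp only [sgn, hi, Int.even_add, Int.not_even_one, 
        if_true, if_false, iff_true, iff_false, not_true_eq_false, not_false_eq_true] <;> simp
  d1_sq := by
    rintro n ⟨m, b, α⟩ ⟨hm, hb, hα⟩
    have hk' := Int.not_even_iff_odd.mpr hk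
    have h1 := S.D_deg _ _ hb
    simp only [e0d_apply, e1d_apply, map_add, map_neg, S.D_sq _ _ hm, S.D_sq _ _ hb,
      S.D_sq _ _ hα, S.tau_eq _ _ hb, S.tau_eq _ _ h1, map_smul]
    by_cases hi : Even n <;>
    simp only [sgn, hi, hk', Int.even_sub, Int.not_even_one, 
        if_true, if_false, iff_true, iff_false, not_true_eq_false, not_false_eq_true] <;> simp
  d01 := by
    rintro n ⟨m, b, α⟩ ⟨hm, hb, hα⟩
    have hk' := Int.not_even_iff_odd.mpr hk
    have h1 := S.D_deg _ _ hb
    have h2 := S.d_deg _ _ hb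
    simp only [e0d_apply, e1d_apply, map_add, map_neg, S.dD _ _ hm, S.dD _ _ hb,
      S.dD _ _ hα, S.tau_eq _ _ hb, S.tau_eq _ _ h1, S.tau_eq _ _ h2, map_smul]
    by_cases hi : Even n <;>
    simp only [sgn, hi, hk', Int.even_sub, Int.even_add, Int.not_even_one, 
        if_true, if_false, iff_true, iff_false, not_true_eq_false, not_false_eq_true] <;> simp <;> abel
  br_deg := (semi2 hk S).1
  skew := (semi2 hk S).2.1
  jac := (semi2 hk S).2.2
  leib0 := e0_leib hk S
  leib1 := e1_leib hk S

end E0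
end BVProof

set_option linter.all false
set_option linter.unusedSimpArgs false
namespace BVProof

section ofDBV
variable {K : Type u} [Field K] {A : Type v} [Ring A] [Algebra K A] {k : ℤ}

/-- the anticommutator of `d` and `Δ` -/
def DD (B : DBV K k A) : A →ₗ[K] A := B.d ∘ₗ B.Δ + B.Δ ∘ₗ B.d

lemma DD_apply (B : DBV K k A) (a : A) : DD B a = B.d (B.Δ a) + B.Δ (B.d a) := rfl

lemma DD_d (B : DBV K k A) (a : A) : DD B (B.d a) = B.d (DD B a) := by
  simp [DD_apply, B.d_sq]

lemma DD_Δ (B : DBV K k A) (a : A) : DD B (B.Δ a) = B.Δ (DD B a) := by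
  simp [DD_apply, B.Δ_sq]

variable (hk : Odd k) (B : DBV K k A) (g : DGLAStruct K A)
    (hgrading : ∀ i : ℤ, g.grading i = B.grading (i + k))
    (hd : ∀ a : A, g.d a = -B.d a)
    (hbracket : ∀ i : ℤ, ∀ a ∈ B.grading i, ∀ b : A,
      g.bracket a b = ((-1 : K) ^ i) • (B.Δ (a * b) - B.Δ a * b) - a * B.Δ b)

include hgrading in
lemma memg (i : ℤ) (a : A) (ha : a ∈ B.grading i) : a ∈ g.grading (i - k) := by
  rw [hgrading, sub_add_cancel]; exact ha

include hgrading hd in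
lemma g_leib (i : ℤ) (a : A) (ha : a ∈ B.grading i) (b : A) :
    B.d (g.bracket a b) = g.bracket (B.d a) b + ((-1 : K) ^ (i - k)) • g.bracket a (B.d b) := by
  have := g.bracket_leibniz _ a (memg B g hgrading i a ha) b
  simp only [hd, map_neg, LinearMap.neg_apply, smul_neg] at this
  rw [← neg_inj, this]; abel

include hk hgrading hd hbracket in
lemma DD_mul (i : ℤ) (a : A) (ha : a ∈ B.grading i) (b : A) :
    DD B (a * b) = DD B a * b + a * DD B b := by
  have hk' := Int.not_even_iff_odd.mpr hk
  have h := g_leib B g hgrading hd i a ha b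
  rw [hbracket i a ha, hbracket i a ha, hbracket _ _ (B.d_degree i a ha)] at h
  simp only [DD_apply, B.d_leibniz i a ha, map_add, map_sub, map_smul,
    B.d_leibniz _ _ (B.Δ_degree i a ha), add_mul, mul_add] at h ⊢
  by_cases hi : Even i <;> simp only [sgn, hi, hk', Int.even_add, Int.even_sub, Int.not_even_one, or_true, or_false, true_or, false_or, if_true, if_false, iff_true, iff_false, true_iff, false_iff, not_true_eq_false, not_false_eq_true] at h ⊢
  · linear_combination (norm := module) h
  · linear_combination (norm := module) (-1 : K) • h

include hk hbracket in
lemma g_poisson (i j l : ℤ) (a : A) (ha : a ∈ B.grading i) (b : A) (hb : b ∈ B.grading j)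
    (c : A) (hc : c ∈ B.grading l) :
    g.bracket a (b * c) = g.bracket a b * c + ((-1 : K) ^ ((i - k) * j)) • (b * g.bracket a c) := by
  have hk' := Int.not_even_iff_odd.mpr hk
  have e7 := B.seven_term i j l a ha b hb c hc
  rw [hbracket i a ha, hbracket i a ha, hbracket i a ha]
  have c1 : B.Δ b * a * c = ((-1 : K) ^ ((j - k) * i)) • (a * B.Δ b * c) := by
    rw [B.mul_gcomm _ _ _ (B.Δ_degree _ _ hb) _ ha, smul_mul_assoc]
  have c2 : B.Δ c * a * b = ((-1 : K) ^ ((l - k) * (i + j))) • (a * b * B.Δ c) := by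
    rw [mul_assoc, B.mul_gcomm _ _ _ (B.Δ_degree _ _ hc) _ (B.mul_mem _ _ _ ha _ hb)]
  have c3 : B.Δ (b * c) * a = ((-1 : K) ^ ((j + l - k) * i)) • (a * B.Δ (b * c)) := by
    rw [B.mul_gcomm _ _ _ (B.Δ_degree _ _ (B.mul_mem _ _ _ hb _ hc)) _ ha]
  have c4 : B.Δ (a * c) * b = ((-1 : K) ^ ((i + l - k) * j)) • (b * B.Δ (a * c)) := by
    rw [B.mul_gcomm _ _ _ (B.Δ_degree _ _ (B.mul_mem _ _ _ ha _ hc)) _ hb]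
  have c5 : b * (a * B.Δ c) = ((-1 : K) ^ (j * i)) • (a * b * B.Δ c) := by
    rw [← mul_assoc, B.mul_gcomm _ _ _ hb _ ha, smul_mul_assoc]
  have c6 : b * (B.Δ a * c) = ((-1 : K) ^ (j * (i - k))) • (B.Δ a * b * c) := by
    rw [← mul_assoc, B.mul_gcomm _ _ _ hb _ (B.Δ_degree _ _ ha), smul_mul_assoc]
  rw [c1, c2, c3, c4] at e7
  simp only [mul_sub, sub_mul, mul_smul_comm, smul_mul_assoc, c5, c6, ← mul_assoc a b c,
    ← mul_assoc (B.Δ a) b c]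
  by_cases hi : Even i <;> by_cases hj : Even j <;> by_cases hl : Even l <;>
    simp only [sgn, hi, hj, hl, hk', Int.even_mul, Int.even_add, Int.even_sub, Int.not_even_one, or_true, or_false, true_or, false_or, if_true, if_false, iff_true, iff_false, true_iff, false_iff, not_true_eq_false, not_false_eq_true] at e7 ⊢ <;>
  first
  | linear_combination (norm := module) e7
  | linear_combination (norm := module) (-1 : K) • e7

include hk hbracket in
lemma g_D_br (i : ℤ) (a : A) (ha : a ∈ B.grading i) (b : A) :
    B.Δ (g.bracket a b) = g.bracket (B.Δ a) b + ((-1 : K) ^ (i - k)) • g.bracket a (B.Δ b) := by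
  have hk' := Int.not_even_iff_odd.mpr hk
  rw [hbracket i a ha, hbracket i a ha, hbracket _ _ (B.Δ_degree i a ha)]
  simp only [map_sub, map_smul, B.Δ_sq, zero_mul, mul_zero]
  by_cases hi : Even i <;> simp only [sgn, hi, hk', Int.even_add, Int.even_sub, Int.not_even_one, or_true, or_false, true_or, false_or, if_true, if_false, iff_true, iff_false, true_iff, false_iff, not_true_eq_false, not_false_eq_true] <;> module

/-- the homogeneous elements killed by `DD` -/
def FF (B : DBV K k A) (i : ℤ) : Submodule K A := B.grading i ⊓ LinearMap.ker (DD B)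

lemma mem_FF {B : DBV K k A} {i : ℤ} {a : A} : a ∈ FF B i ↔ a ∈ B.grading i ∧ DD B a = 0 :=
  Iff.rfl

include hk hgrading hd hbracket in
lemma exists_BVF : ∃ S : BVF K k A, S.F = FF B ∧ S.br = g.bracket ∧ S.d = B.d ∧ S.Δ = B.Δ := by
  have hk' := Int.not_even_iff_odd.mpr hk
  obtain ⟨τ, hτ⟩ := exists_of_internal B.isInternal
    (fun i => ((-1 : K) ^ i) • (B.grading i).subtype)
  have hmul : ∀ i j, ∀ a ∈ FF B i, ∀ b ∈ FF B j, a * b ∈ FF B (i + j) := by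
    intro i j a ha b hb
    refine mem_FF.mpr ⟨B.mul_mem _ _ _ ha.1 _ hb.1, ?_⟩
    rw [DD_mul hk B g hgrading hd hbracket i a ha.1, (mem_FF.mp ha).2,
      (mem_FF.mp hb).2]
    simp
  have hdd : ∀ i, ∀ a ∈ FF B i, B.d a ∈ FF B (i + 1) := by
    intro i a ha
    refine mem_FF.mpr ⟨B.d_degree _ _ ha.1, ?_⟩
    rw [DD_d, (mem_FF.mp ha).2, map_zero]
  have hD : ∀ i, ∀ a ∈ FF B i, B.Δ a ∈ FF B (i - k) := by
    intro i a ha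
    refine mem_FF.mpr ⟨B.Δ_degree _ _ ha.1, ?_⟩
    rw [DD_Δ, (mem_FF.mp ha).2, map_zero]
  refine ⟨{
    F := FF B
    indep := B.isInternal.submodule_iSupIndep.mono fun i => inf_le_left
    br := g.bracket
    d := B.d
    Δ := B.Δ
    τ := τ
    tau_eq := fun i a ha => by simpa using hτ i ⟨a, ha.1⟩
    mul_mem := hmul
    d_deg := hdd
    D_deg := hD
    br_deg := ?_
    gcomm := fun i j a ha b hb => B.mul_gcomm i j a ha.1 b hb.1
    d_sq := fun i a ha => B.d_sq a
    D_sq := fun i a ha => B.Δ_sq a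
    dD := fun i a ha => eq_neg_of_add_eq_zero_left (mem_FF.mp ha).2
    d_mul := fun i j a ha b hb => B.d_leibniz i a ha.1 b
    skew := fun i j a ha b hb => g.bracket_skew _ _ a (memg B g hgrading i a ha.1) b
      (memg B g hgrading j b hb.1)
    jac := fun i j l a ha b hb c hc => g.bracket_jacobi _ _ a (memg B g hgrading i a ha.1) b
      (memg B g hgrading j b hb.1) c
    d_br := fun i j a ha b hb => g_leib B g hgrading hd i a ha.1 b
    D_br := fun i j a ha b hb => g_D_br hk B g hbracket i a ha.1 b
    poisson := fun i j l a ha b hb c hc => g_poisson hk B g hbracket i j l a ha.1 b hb.1 c hc.1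
    D_mul := ?_ }, rfl, rfl, rfl, rfl⟩
  · intro i j a ha b hb
    rw [hbracket i a ha.1]
    have h1 := hD _ _ (hmul _ _ _ ha _ hb)
    have h2 := hmul _ _ _ (hD _ _ ha) _ hb
    have h3 := hmul _ _ _ ha _ (hD _ _ hb)
    rw [show i - k + j = i + j - k by ring] at h2
    rw [show i + (j - k) = i + j - k by ring] at h3
    exact sub_mem (Submodule.smul_mem _ _ (sub_mem h1 h2)) h3
  · intro i j a ha b hb
    rw [hbracket i a ha.1]
    by_cases hi : Even i <;> simp only [sgn, hi, if_true, if_false] <;> module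

lemma seq_FF {i : ℤ} {a : ℕ → A} (h0 : B.d (a 0) = 0)
    (hg : ∀ n : ℕ, a n ∈ B.grading (i - n * (k + 1)))
    (hs : ∀ n : ℕ, B.Δ (a n) = B.d (a (n + 1))) (n : ℕ) : a n ∈ FF B (i - n * (k + 1)) := by
  refine mem_FF.mpr ⟨hg n, ?_⟩
  rw [DD_apply, hs, B.d_sq, zero_add]
  cases n with
  | zero => rw [h0, map_zero]
  | succ n => rw [← hs, B.Δ_sq]

end ofDBV
end BVProof

set_option linter.all false
set_option linter.unusedSimpArgs false
namespace BVProof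

section trunc
variable {K : Type u} [Field K] {A : Type v} [Ring A] [Algebra K A] {k : ℤ}

/-- the Laurent series of a sequence -/
def ser (c : ℕ → A) (p : ℤ) : A := if 0 ≤ p then c p.toNat else 0

lemma ser_neg (c : ℕ → A) {p : ℤ} (hp : p < 0) : ser c p = 0 := if_neg (not_le.mpr hp)
lemma ser_nat (c : ℕ → A) (n : ℕ) : ser c n = c n := by simp [ser]

lemma ser_mem (B : DBV K k A) {i : ℤ} {a : ℕ → A} (hg : ∀ n : ℕ, a n ∈ FF B (i - n * (k + 1)))
    (p : ℤ) : ser a p ∈ FF B (i - p * (k + 1)) := by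
  rcases lt_or_ge p 0 with hp | hp
  · rw [ser_neg a hp]; exact zero_mem _
  · obtain ⟨n, rfl⟩ := Int.eq_ofNat_of_zero_le hp
    rw [ser_nat]; exact hg n

lemma ser_closed (B : DBV K k A) {a : ℕ → A} (h0 : B.d (a 0) = 0)
    (hs : ∀ n : ℕ, B.Δ (a n) = B.d (a (n + 1))) (p : ℤ) :
    -B.d (ser a p) + B.Δ (ser a (p - 1)) = 0 := by
  rcases lt_or_ge p 0 with hp | hp
  · rw [ser_neg a hp, ser_neg a (by omega)]; simp
  · obtain ⟨n, rfl⟩ := Int.eq_ofNat_of_zero_le hp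
    cases n with
    | zero => rw [ser_nat, ser_neg a (by simp), h0]; simp
    | succ n =>
      rw [show (((n + 1 : ℕ) : ℤ) - 1) = (n : ℤ) by push_cast; ring, ser_nat, ser_nat, hs]
      simp

lemma trunc (B : DBV K k A) (hdeg : B.DegenerationProperty) (i : ℤ) (t : ℕ) :
    ∀ r : ℤ → A, Bdd r (-(t : ℤ)) → (∀ p, r p ∈ FF B (i - p * (k + 1))) →
    (∀ p, p < 0 → -B.d (r p) + B.Δ (r (p - 1)) = 0) →
    ∃ r' : ℤ → A, Bdd r' 0 ∧ (∀ p, r' p ∈ FF B (i - p * (k + 1))) ∧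
      ∀ p, -B.d (r' p) + B.Δ (r' (p - 1)) = -B.d (r p) + B.Δ (r (p - 1)) := by
  induction t with
  | zero => exact fun r h1 h2 _ => ⟨r, by simpa using h1, h2, fun _ => rfl⟩
  | succ t ih =>
    intro r h1 h2 h3
    set p0 : ℤ := -((t + 1 : ℕ) : ℤ) with hp0
    have h4 := h3 p0 (by omega)
    rw [h1 (p0 - 1) (by omega), map_zero, add_zero, neg_eq_zero] at h4
    obtain ⟨c, c0, cg, cs⟩ := hdeg _ _ (h2 p0).1 h4
    have c0' : B.d (c 0) = 0 := by rw [c0, h4]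
    have cF := seq_FF B c0' cg cs
    have key : ∀ p, -B.d (r p - ser c (p - p0)) + B.Δ (r (p - 1) - ser c (p - 1 - p0)) =
        -B.d (r p) + B.Δ (r (p - 1)) := by
      intro p
      have := ser_closed B c0' cs (p - p0)
      rw [show p - p0 - 1 = p - 1 - p0 by ring] at this
      rw [map_sub, map_sub, ← sub_zero (-B.d (r p) + B.Δ (r (p - 1))), ← this]
      abel
    obtain ⟨r', b1, b2, b3⟩ := ih (fun p => r p - ser c (p - p0)) (by
        intro p hp
        rcases lt_or_eq_of_le (show p ≤ p0 by omega) with h | h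
        · simp only
          rw [h1 p h, ser_neg c (by omega), sub_zero]
        · subst h
          have := ser_nat c 0
          simp only [Nat.cast_zero] at this
          simp only [sub_self, this, c0])
      (fun p => sub_mem (h2 p) (by
        have := ser_mem B cF (p - p0)
        rwa [show i - p0 * (k + 1) - (p - p0) * (k + 1) = i - p * (k + 1) by ring] at this))
      (fun p hp => (key p).trans (h3 p hp))
    exact ⟨r', b1, b2, fun p => (b3 p).trans (key p)⟩

end trunc

section final
variable {K : Type u} [Field K] {A : Type v} [Ring A] [Algebra K A] {k : ℤ}

/-- the abelian part -/
def MM (S : BVF K k A) (n : ℤ) : Submodule K (lau K (A × A × A)) where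
  carrier := {f | f ∈ GLau k (G2 S) n ∧ ∀ p, (f.1 p).2 = 0}
  zero_mem' := ⟨zero_mem _, fun p => rfl⟩
  add_mem' := by
    rintro f f' ⟨h1, h2⟩ ⟨h1', h2'⟩
    refine ⟨add_mem h1 h1', fun p => ?_⟩
    change (f.1 p).2 + (f'.1 p).2 = 0
    rw [h2, h2', add_zero]
  smul_mem' := by
    rintro c f ⟨h1, h2⟩
    refine ⟨Submodule.smul_mem _ _ h1, fun p => ?_⟩
    change c • (f.1 p).2 = 0
    rw [h2, smul_zero]

/-- the part resolving `g` -/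
def NN (S : BVF K k A) (n : ℤ) : Submodule K (lau K (A × A × A)) where
  carrier := {f | f ∈ GLau k (G2 S) n ∧ (∀ p, (f.1 p).1 = 0 ∧ (f.1 p).2.1 = 0) ∧ Bdd f.1 0}
  zero_mem' := ⟨zero_mem _, fun p => ⟨rfl, rfl⟩, fun p _ => rfl⟩
  add_mem' := by
    rintro f f' ⟨h1, h2, h3⟩ ⟨h1', h2', h3'⟩
    refine ⟨add_mem h1 h1', fun p => ⟨?_, ?_⟩, fun p hp => ?_⟩
    · change (f.1 p).1 + (f'.1 p).1 = 0
      rw [(h2 p).1, (h2' p).1, add_zero]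
    · change (f.1 p).2.1 + (f'.1 p).2.1 = 0
      rw [(h2 p).2, (h2' p).2, add_zero]
    · change f.1 p + f'.1 p = 0
      rw [h3 p hp, h3' p hp, add_zero]
  smul_mem' := by
    rintro c f ⟨h1, h2, h3⟩
    refine ⟨Submodule.smul_mem _ _ h1, fun p => ⟨?_, ?_⟩, fun p hp => ?_⟩
    · change c • (f.1 p).1 = 0
      rw [(h2 p).1, smul_zero]
    · change c • (f.1 p).2.1 = 0
      rw [(h2 p).2, smul_zero]
    · change c • f.1 p = 0
      rw [h3 p hp, smul_zero]

/-- evaluation at `t = 0` of the last component -/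
def ppi : lau K (A × A × A) →ₗ[K] A :=
  LinearMap.snd K A A ∘ₗ LinearMap.snd K A (A × A) ∘ₗ LinearMap.proj 0 ∘ₗ
    (lau K (A × A × A)).subtype

lemma ppi_apply (f : lau K (A × A × A)) : ppi f = (f.1 0).2.2 := rfl

lemma dE_apply (hk : Odd k) (S : BVF K k A) (f : lau K (A × A × A)) (p : ℤ) :
    ((lauDGLA hk (E0 hk S)).d f).1 p =
      (-S.d (f.1 p).1 + S.τ (f.1 p).2.1 + S.Δ (f.1 (p - 1)).1,
        -S.d (f.1 p).2.1 + S.Δ (f.1 (p - 1)).2.1,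
        -S.d (f.1 p).2.2 + (S.Δ (f.1 (p - 1)).2.2 + S.τ (f.1 (p - 1)).2.1)) := rfl

lemma brE_apply (hk : Odd k) (S : BVF K k A) (f f' : lau K (A × A × A)) (p : ℤ) :
    ((lauDGLA hk (E0 hk S)).br f f').1 p = conv (bE2 S) f.1 f'.1 p := rfl

lemma bE2_MM (S : BVF K k A) (x y : A × A × A) (hx : x.2 = 0) (hy : y.2 = 0) : bE2 S x y = 0 := by
  obtain ⟨m, b, α⟩ := x
  obtain ⟨m', b', α'⟩ := y
  simp only at hx hy
  obtain ⟨rfl, rfl⟩ := Prod.mk_eq_zero.mp hx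
  obtain ⟨rfl, rfl⟩ := Prod.mk_eq_zero.mp hy
  simp [bE2, bE1, rho2]

lemma bE2_NN (S : BVF K k A) (x y : A × A × A) (hx : x.1 = 0 ∧ x.2.1 = 0)
    (hy : y.1 = 0 ∧ y.2.1 = 0) : bE2 S x y = (0, 0, S.br x.2.2 y.2.2) := by
  obtain ⟨m, b, α⟩ := x
  obtain ⟨m', b', α'⟩ := y
  simp only at hx hy
  obtain ⟨rfl, rfl⟩ := hx
  obtain ⟨rfl, rfl⟩ := hy
  simp [bE2, bE1, rho2]

/-- third inclusion -/
def inj3 (r : ℤ → A) (hr : Bdd r 0) : lau K (A × A × A) :=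
  ⟨fun p => (0, 0, r p), 0, fun p hp => by simp [hr p hp]⟩

lemma inj3_mem (S : BVF K k A) (r : ℤ → A) (hr : Bdd r 0) (n : ℤ)
    (h : ∀ p, r p ∈ S.F (n - p * (k + 1) + k)) : inj3 r hr ∈ NN S n :=
  ⟨fun p => ⟨zero_mem _, zero_mem _, h p⟩, fun p => ⟨rfl, rfl⟩, fun p hp => by
    change ((0, 0, r p) : A × A × A) = 0
    rw [hr p hp]; rfl⟩

lemma inj3_d (hk : Odd k) (S : BVF K k A) (r : ℤ → A) (hr : Bdd r 0) (p : ℤ) :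
    ((lauDGLA hk (E0 hk S)).d (inj3 r hr)).1 p = (0, 0, -S.d (r p) + S.Δ (r (p - 1))) := by
  rw [dE_apply]
  simp [inj3]

lemma cond_a (hk : Odd k) (S : BVF K k A) (n : ℤ) (x : lau K (A × A × A))
    (hx : x ∈ GLau k (G2 S) n) (hdx : (lauDGLA hk (E0 hk S)).d x = 0) :
    ∃ c ∈ MM S n, ∃ e ∈ GLau k (G2 S) (n - 1), x = c + (lauDGLA hk (E0 hk S)).d e := by
  have hk' := Int.not_even_iff_odd.mpr hk
  obtain ⟨N, hN⟩ := x.2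
  let e : lau K (A × A × A) := ⟨fun p => (0, -((-1 : K) ^ n) • (x.1 (p + 1)).2.2, 0), N - 1,
    fun p hp => by simp [hN (p + 1) (by omega)]⟩
  have he : e ∈ GLau k (G2 S) (n - 1) := by
    intro p
    refine ⟨zero_mem _, ?_, zero_mem _⟩
    have := (hx (p + 1)).2.2
    rw [show n - (p + 1) * (k + 1) + k = n - 1 - p * (k + 1) by ring] at this
    exact Submodule.smul_mem _ _ this
  have hde := (lauDGLA hk (E0 hk S)).d_deg _ _ he
  rw [sub_add_cancel] at hde
  refine ⟨x - (lauDGLA hk (E0 hk S)).d e, ⟨sub_mem hx hde, fun p => ?_⟩, e, he, (sub_add_cancel _ _).symm⟩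
  change (x.1 p).2 - (((lauDGLA hk (E0 hk S)).d e).1 p).2 = 0
  rw [dE_apply]
  have hp := congrArg (fun f => (f.1 (p + 1)).2.2) hdx
  simp only [dE_apply, add_sub_cancel_right] at hp
  change _ = (0 : A) at hp
  have e1 : e.1 p = (0, -((-1 : K) ^ n) • (x.1 (p + 1)).2.2, 0) := rfl
  have e2 : e.1 (p - 1) = (0, -((-1 : K) ^ n) • (x.1 p).2.2, 0) := by
    change (0, -((-1 : K) ^ n) • (x.1 (p - 1 + 1)).2.2, 0) = _
    rw [sub_add_cancel]
  rw [S.tau_eq _ _ (hx p).2.1, sgn_sh hk] at hp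
  rw [e1, e2]
  refine Prod.ext ?_ ?_
  · simp only [map_smul, Prod.fst_sub, Prod.fst_zero]
    by_cases hi : Even n <;> simp only [sgn, hi, if_true, if_false] at hp ⊢
    · linear_combination (norm := module) hp
    · linear_combination (norm := module) (-1 : K) • hp
  · simp only [map_smul, map_zero, Prod.snd_sub, Prod.snd_zero, S.tau_eq _ _ (hx p).2.2]
    rw [show n - p * (k + 1) + k = n + k - p * (k + 1) by ring, sgn_sh hk]
    by_cases hi : Even n <;> simp only [sgn, hi, hk', Int.even_add, if_true, if_false, iff_true, iff_false, not_true_eq_false, not_false_eq_true] <;> module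

end final

theorem main {K : Type u} [Field K] [CharZero K]
    {A : Type u} [Ring A] [Algebra K A] {k : ℤ} (hk : Odd k)
    (B : DBV K k A) (hdeg : B.DegenerationProperty)
    (g : DGLAStruct K A)
    (hgrading : ∀ i : ℤ, g.grading i = B.grading (i + k))
    (hd : ∀ a : A, g.d a = -B.d a)
    (hbracket : ∀ i : ℤ, ∀ a ∈ B.grading i, ∀ b : A,
      g.bracket a b = ((-1 : K) ^ i) • (B.Δ (a * b) - B.Δ a * b) - a * B.Δ b) :
    DGLA.HomotopyAbelian (DGLA.mk (K := K) A g) := by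
  obtain ⟨S, hF, hbr, hSd, hSD⟩ := exists_BVF hk B g hgrading hd hbracket
  refine pathlemma g (lauDGLA hk (E0 hk S)) (MM S) (NN S) (fun i x hx => hx.1)
    (fun i x hx => hx.1) ?_ ?_ ?_ ?_ ppi ?_ ?_ ?_ (cond_a hk S) ?_ ?_
  · rintro i x ⟨h1, h2⟩
    refine ⟨(lauDGLA hk (E0 hk S)).d_deg _ _ h1, fun p => ?_⟩
    rw [dE_apply, h2 p, h2 (p - 1)]
    simp
  · rintro i x ⟨h1, h2, h3⟩
    refine ⟨(lauDGLA hk (E0 hk S)).d_deg _ _ h1, fun p => ?_, fun p hp => ?_⟩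
    · rw [dE_apply, (h2 p).1, (h2 p).2, (h2 (p - 1)).1, (h2 (p - 1)).2]
      simp
    · rw [dE_apply, h3 p hp, h3 (p - 1) (by omega)]
      simp
  · rintro i j x ⟨h1, h2⟩ y ⟨h1', h2'⟩
    ext1
    funext p
    rw [brE_apply]
    unfold conv
    simp [bE2_MM S _ _ (h2 _) (h2' _)]
  · rintro i j x ⟨h1, h2, h3⟩ y ⟨h1', h2', h3'⟩
    refine ⟨(lauDGLA hk (E0 hk S)).br_deg _ _ _ h1 _ h1', fun p => ?_, fun p hp => ?_⟩
    · rw [brE_apply, conv_eq _ h3 h3' p _ (subset_refl _)]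
      rw [Finset.sum_congr rfl fun i _ => bE2_NN S _ _ (h2 i) (h2' (p - i))]
      simp [Prod.fst_sum, Prod.snd_sum]
    · exact conv_bdd (bE2 S) h3 h3' p (by omega)
  · rintro i x ⟨h1, h2, h3⟩
    have := (h1 0).2.2
    rw [hF] at this
    rw [hgrading, ppi_apply]
    simpa using this.1
  · rintro i x ⟨h1, h2, h3⟩
    rw [ppi_apply, dE_apply, h3 (0 - 1) (by omega), hd, ppi_apply, hSd]
    simp
  · rintro i j x ⟨h1, h2, h3⟩ y ⟨h1', h2', h3'⟩
    rw [ppi_apply, brE_apply, conv_eq _ h3 h3' 0 {0} (by simp), Finset.sum_singleton,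
      bE2_NN S _ _ (h2 _) (h2' _), hbr]
    simp [ppi_apply]
  · rintro i x ⟨h1, h2, h3⟩ e he hde
    obtain ⟨N, hN⟩ := e.2
    let r : ℤ → A := fun p => (e.1 p).2.2 - (e.1 (p - 1)).1
    have hrF : ∀ p, r p ∈ FF B (i - 1 + k - p * (k + 1)) := by
      intro p
      rw [← hF]
      have a1 := (he p).2.2
      have a2 := (he (p - 1)).1
      rw [show i - 1 - p * (k + 1) + k = i - 1 + k - p * (k + 1) by ring] at a1
      rw [show i - 1 - (p - 1) * (k + 1) - 1 = i - 1 + k - p * (k + 1) by ring] at a2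
      exact sub_mem a1 a2
    have hrd : ∀ p, -B.d (r p) + B.Δ (r (p - 1)) = (x.1 p).2.2 := by
      intro p
      have b1 := congrArg (fun f => (f.1 p).2.2) hde
      have b2 := congrArg (fun f => (f.1 (p - 1)).1) hde
      simp only [dE_apply, (h2 _).1, hSd, hSD] at b1 b2
      simp only [r, map_sub]
      rw [← b1, ← sub_zero (_ + (_ + S.τ _)), ← b2]
      abel
    obtain ⟨r', c1, c2, c3⟩ := trunc B hdeg (i - 1 + k) (-N).toNat.succ r
      (by
        intro p hp
        have : p < N := by omega
        simp [r, hN p this, hN (p - 1) (by omega)]) hrF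
      (by
        intro p hp
        rw [hrd, h3 p hp]; rfl)
    refine ⟨inj3 r' c1, inj3_mem S r' c1 _ fun p => ?_, ?_⟩
    · rw [hF, show i - 1 - p * (k + 1) + k = i - 1 + k - p * (k + 1) by ring]
      exact c2 p
    · ext1
      funext p
      rw [inj3_d, hSd, hSD, c3, hrd]
      exact Prod.ext (h2 p).1.symm (Prod.ext (h2 p).2.symm rfl)
  · intro i a ha hda
    rw [hgrading] at ha
    rw [hd, neg_eq_zero] at hda
    obtain ⟨c, c0, cg, cs⟩ := hdeg _ _ ha hda
    have c0' : B.d (c 0) = 0 := by rw [c0, hda]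
    have hb : Bdd (ser c) 0 := fun p hp => ser_neg c hp
    refine ⟨inj3 (ser c) hb, inj3_mem S _ hb _ fun p => ?_, ?_, ?_⟩
    · rw [hF, show i - p * (k + 1) + k = i + k - p * (k + 1) by ring]
      exact ser_mem B (seq_FF B c0' cg cs) p
    · ext1
      funext p
      rw [inj3_d, hSd, hSD, ser_closed B c0' cs]
      rfl
    · rw [ppi_apply, ← c0]
      exact ser_nat c 0

end BVProof

/-- Let `(A, d, Δ)` be a differential Batalin–Vilkovisky algebra of
odd degree `k` over a field `K` of characteristic `0` which has the degeneration
property.  Then the associated DGLA `g = A[k]` — with grading `g^i = A^{i+k}`,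
differential `-d`, and bracket `[a,b] = (-1)^{deg a} (Δ(ab) - Δ(a)b) - aΔ(b)` —
is homotopy abelian. -/
theorem dbv_degeneration_homotopy_abelian {K : Type u} [Field K] [CharZero K]
    {A : Type u} [Ring A] [Algebra K A] {k : ℤ} (hk : Odd k)
    (B : DBV K k A) (hdeg : B.DegenerationProperty)
    (g : DGLAStruct K A)
    (hgrading : ∀ i : ℤ, g.grading i = B.grading (i + k))
    (hd : ∀ a : A, g.d a = -B.d a)
    (hbracket : ∀ i : ℤ, ∀ a ∈ B.grading i, ∀ b : A,
      g.bracket a b = ((-1 : K) ^ i) • (B.Δ (a * b) - B.Δ a * b) - a * B.Δ b) :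
    DGLA.HomotopyAbelian (DGLA.mk (K := K) A g) := by
  exact BVProof.main hk B hdeg g hgrading hd hbracket
end

section
/- Let (A, d, Δ) be a differential Batalin–Vilkovisky algebra of odd degree k over a field K of characteristic 0, let t be a central formal variable of (even) degree k+1, and equip A((t)) (formal Laurent series with coefficients in A) with the differential d − tΔ. Then the degree −1 linear map i : g → Hom^*_K(A((t)), A((t))), i_a(b) = (1/t) a b, from the associated DGLA g = A[k], is a Cartan homotopy: i_{[a,b]} = [i_a, d i_b] and [i_a, i_b] = 0 for all a, b ∈ g, where d denotes the differential of the Hom DGLA induced by d − tΔ. -/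
universe u v w

theorem negone_zpow_ite {K : Type u} [Field K] (n : ℤ) :
    (-1 : K) ^ n = if Even n then 1 else -1 := by
  split_ifs with h
  · exact h.neg_one_zpow
  · exact (Int.not_even_iff_odd.1 h).neg_one_zpow

theorem dbv_key_hom {K : Type u} [Field K]
    {A : Type u} [Ring A] [Algebra K A] {k : ℤ} (hk : Odd k) (B : DBV K k A)
    (α β l : ℤ) (a b c : A) (ha : a ∈ B.grading α) (hb : b ∈ B.grading β)
    (hc : c ∈ B.grading l) :
    (((-1 : K) ^ α) • (B.Δ (a * b) - B.Δ a * b) - a * B.Δ b) * c =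
      - (a * B.Δ (b * c)) + ((-1 : K) ^ β) • (a * (b * B.Δ c))
      + ((-1 : K) ^ (α * (β + 1))) •
        (B.Δ (b * (a * c)) - ((-1 : K) ^ β) • (b * B.Δ (a * c))) := by
  have h7 := B.seven_term α β l a ha b hb c hc
  have h1 := B.mul_gcomm _ _ _ (B.Δ_degree _ _ (B.mul_mem _ _ _ hb _ hc)) _ ha
  have h2 := B.mul_gcomm _ _ _ (B.Δ_degree _ _ (B.mul_mem _ _ _ ha _ hc)) _ hb
  have h3 := B.mul_gcomm _ _ _ (B.Δ_degree _ _ hb) _ ha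
  have h4 := B.mul_gcomm _ _ _ (B.Δ_degree _ _ hc) _ (B.mul_mem _ _ _ ha _ hb)
  have h5 := B.mul_gcomm _ _ _ hb _ ha
  rw [mul_assoc (B.Δ c) a b, h4, h3, h2, h1] at h7
  rw [← mul_assoc b a c, h5]
  have hk' : ¬ Even k := Int.not_even_iff_odd.2 hk
  simp only [negone_zpow_ite, Int.even_add, Int.even_sub, Int.even_mul, hk'] at h7 ⊢
  clear h1 h2 h3 h4 h5
  by_cases hα : Even α <;> by_cases hβ : Even β <;> by_cases hl : Even l <;>
    simp [hα, hβ, hl, mul_assoc, sub_mul, mul_sub] at h7 ⊢ <;> grind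

theorem dbv_key {K : Type u} [Field K]
    {A : Type u} [Ring A] [Algebra K A] {k : ℤ} (hk : Odd k) (B : DBV K k A)
    (α β : ℤ) (a b c : A) (ha : a ∈ B.grading α) (hb : b ∈ B.grading β) :
    (((-1 : K) ^ α) • (B.Δ (a * b) - B.Δ a * b) - a * B.Δ b) * c =
      - (a * B.Δ (b * c)) + ((-1 : K) ^ β) • (a * (b * B.Δ c))
      + ((-1 : K) ^ (α * (β + 1))) •
        (B.Δ (b * (a * c)) - ((-1 : K) ^ β) • (b * B.Δ (a * c))) := by
  have hc : c ∈ iSup B.grading := by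
    rw [B.isInternal.submodule_iSup_eq_top]; trivial
  induction hc using Submodule.iSup_induction' with
  | mem l c hc => exact dbv_key_hom hk B α β l a b c ha hb hc
  | zero => simp
  | add x y _ _ hx hy =>
    rw [mul_add, hx, hy]
    simp only [mul_add, map_add, smul_add, smul_sub]
    abel

theorem laurentD_coe {K : Type u} [Field K]
    {A : Type u} [Ring A] [Algebra K A] {k : ℤ} (B : DBV K k A) (f : Laurent K A) (p : ℤ) :
    (laurentD B f : ℤ → A) p = B.d ((f : ℤ → A) p) - B.Δ ((f : ℤ → A) (p - 1)) := rfl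

theorem laurentContr_coe {K : Type u} [Field K]
    {A : Type u} [Ring A] [Algebra K A] (a : A) (f : Laurent K A) (p : ℤ) :
    (laurentContr (K := K) a f : ℤ → A) p = a * (f : ℤ → A) (p + 1) := rfl

/-- Let `(A, d, Δ)` be a differential Batalin–Vilkovisky algebra of
odd degree `k` over a field `K` of characteristic `0`, and equip `A((t))` (`t` central
of even degree `k+1`) with the differential `d - tΔ`.  Then the degree `-1` linear map
`i : g = A[k] → Hom*(A((t)), A((t)))`, `i_a(b) = (1/t) a b`, is a Cartan homotopy:
`i_{[a,b]} = [i_a, d i_b]` and `[i_a, i_b] = 0` for all `a, b ∈ g`, where `d` denotes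
the differential of the Hom DGLA induced by `d - tΔ` and the brackets are graded
commutators (for `a ∈ A^α`, the operator `i_a` has degree `α - k - 1` and
`d i_b = (d-tΔ) ∘ i_b - (-1)^{β-k-1} i_b ∘ (d-tΔ)` has degree `β - k`). -/
theorem dbv_contraction_is_cartan_homotopy {K : Type u} [Field K] [CharZero K]
    {A : Type u} [Ring A] [Algebra K A] {k : ℤ} (hk : Odd k) (B : DBV K k A) :
    (∀ (α β : ℤ) (a b : A), a ∈ B.grading α → b ∈ B.grading β →
      laurentContr (K := K) (((-1 : K) ^ α) • (B.Δ (a * b) - B.Δ a * b) - a * B.Δ b) =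
        laurentContr (K := K) a ∘ₗ
            (laurentD B ∘ₗ laurentContr (K := K) b -
              ((-1 : K) ^ (β - k - 1)) • (laurentContr (K := K) b ∘ₗ laurentD B)) -
          ((-1 : K) ^ ((α - k - 1) * (β - k))) •
            ((laurentD B ∘ₗ laurentContr (K := K) b -
              ((-1 : K) ^ (β - k - 1)) • (laurentContr (K := K) b ∘ₗ laurentD B)) ∘ₗ
                laurentContr (K := K) a)) ∧
    (∀ (α β : ℤ) (a b : A), a ∈ B.grading α → b ∈ B.grading β →
      laurentContr (K := K) a ∘ₗ laurentContr (K := K) b =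
        ((-1 : K) ^ ((α - k - 1) * (β - k - 1))) •
          (laurentContr (K := K) b ∘ₗ laurentContr (K := K) a)) := by
  have hk' : ¬ Even k := Int.not_even_iff_odd.2 hk
  have e1 : ∀ β : ℤ, (-1 : K) ^ (β - k - 1) = (-1 : K) ^ β := by
    intro β
    simp only [negone_zpow_ite, Int.even_sub, Int.even_mul, Int.even_add, hk', Int.not_even_one]
    simp
  have e2 : ∀ α β : ℤ, (-1 : K) ^ ((α - k - 1) * (β - k)) = (-1 : K) ^ (α * (β + 1)) := by
    intro α β
    simp only [negone_zpow_ite, Int.even_sub, Int.even_mul, Int.even_add, hk', Int.not_even_one]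
    simp
  have e3 : ∀ α β : ℤ, (-1 : K) ^ ((α - k - 1) * (β - k - 1)) = (-1 : K) ^ (α * β) := by
    intro α β
    simp only [negone_zpow_ite, Int.even_sub, Int.even_mul, Int.even_add, hk', Int.not_even_one]
    simp
  constructor
  · intro α β a b ha hb
    rw [e1, e2]
    ext f p
    simp only [LinearMap.sub_apply, LinearMap.comp_apply, LinearMap.smul_apply,
      Submodule.coe_sub, Submodule.coe_smul, Pi.sub_apply, Pi.smul_apply,
      laurentContr_coe, laurentD_coe, sub_add_cancel, add_sub_cancel_right]
    rw [dbv_key hk B α β a b _ ha hb]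
    have hq := B.d_leibniz β b hb ((f : ℤ → A) (p + 1 + 1))
    have hq2 := B.d_leibniz β b hb (a * (f : ℤ → A) (p + 1 + 1))
    have hcm := B.mul_gcomm _ _ _ ha _ (B.d_degree _ _ hb)
    have hcm' := congrArg (· * (f : ℤ → A) (p + 1 + 1)) hcm
    simp only [smul_mul_assoc, mul_assoc] at hcm'
    rw [hq, hq2]
    simp only [mul_add, mul_sub, smul_add, smul_sub, hcm', mul_smul_comm]
    abel
  · intro α β a b ha hb
    rw [e3]
    ext f p
    simp only [LinearMap.comp_apply, LinearMap.smul_apply,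
      Submodule.coe_smul, Pi.smul_apply, laurentContr_coe]
    rw [← mul_assoc, B.mul_gcomm _ _ _ ha _ hb, smul_mul_assoc, mul_assoc]
end
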